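/- arXiv:1205.2987 — 2 statements merged into one kernel-verified Lean document; each statement's English description precedes it below -/
import Mathlib

section
/- Let W ⊆ V be a subspace on which h is nondegenerate, W' = W^⊥ its orthogonal complement (so V = W ⊕ W'), and k = dim_E W' = dim_E V − dim_E W. Let 𝔤 = 𝔲(V,h) and 𝔥 = {X ∈ 𝔤 : X(W') = 0} (such X automatically preserve W, and 𝔥 is identified with 𝔲(W, h|_W)). Let x ∈ U(V,h) be semisimple (its minimal polynomial over E is squarefree) with x|_{W'} = id (hence x(W) = W). Write Ad(x)(X) = x X x^{-1}, 𝔤_x = ker(Ad(x) − id) on 𝔤, and 𝔥_x = 𝔥 ∩ 𝔤_x. Then det_F of the F-linear endomorphism induced by Ad(x) − id on 𝔤/𝔤_x equals det_F of the F-linear endomorphism induced by Ad(x) − id on 𝔥/𝔥_x, multiplied by N_{E/F}(det_E of the E-linear endomorphism induced by x − id on W/ker((x − id)|_W))^k. (Taking normalized absolute values over a p-adic field, this is the identity D^G(x) = D^H(x)·Δ(x)^k, with Δ(x) = |N_{E/F}(det(1 − x)|_{V/ker(x−1)})|_F.) -/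
/-!
Let `p` be the orthogonal projection onto `W`. A skew-hermitian `X` is determined by its blocks
`p X p ∈ 𝔥`, `p X|_{W'} ∈ Hom(W', W)` and `(1 - p) X|_{W'} ∈ 𝔲(W')`, and the first two may be
prescribed freely: an off-diagonal block `A` extends to the skew-hermitian endomorphism `A - A*`.
As `x` is the identity on `W'`, the map `Ad(x) - 1` acts on these blocks as `Ad(x) - 1`, as
composition with `x - 1`, and as `0`. The first block contributes the determinant on `𝔥 / 𝔥_x`,
the second contributes `k = dim W'` copies of `x - 1` on `W / ker (x - 1)`, restricted from `E` to
`F`, and the third lies in the kernel.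
-/

open LinearMap (ker range mem_ker)

section DetQuotKer

variable {R M N : Type*} [CommRing R] [AddCommGroup M] [Module R M] [AddCommGroup N] [Module R N]

/-- The endomorphism of `M ⧸ ker f` induced by `f`. -/
def quotKerMap (f : Module.End R M) : Module.End R (M ⧸ ker f) :=
  (ker f).mapQ (ker f) f fun m hm => by
    rw [Submodule.mem_comap, mem_ker.1 hm]
    exact zero_mem _

@[simp]
theorem quotKerMap_mk (f : Module.End R M) (m : M) :
    quotKerMap f (Submodule.Quotient.mk m) = Submodule.Quotient.mk (f m) := rfl

/-- The determinant of the endomorphism of `M ⧸ ker f` induced by `f`; if `M` is a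
finite-dimensional vector space and `f` is semisimple, this is the product of the nonzero
eigenvalues of `f`. -/
noncomputable def detQuotKer (f : Module.End R M) : R :=
  LinearMap.det (quotKerMap f)

theorem det_eq_detQuotKer {f : Module.End R M} {q : Module.End R (M ⧸ ker f)}
    (hq : ∀ m, q (Submodule.Quotient.mk m) = Submodule.Quotient.mk (f m)) :
    LinearMap.det q = detQuotKer f := by
  have : q = quotKerMap f := Submodule.linearMap_qext _ (LinearMap.ext hq)
  rw [this, detQuotKer]

theorem detQuotKer_eq_det {f : Module.End R M} {f' : Module.End R N} {T : M →ₗ[R] N}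
    (hT : Function.Surjective T) (hker : ker T = ker f) (hTf : T ∘ₗ f = f' ∘ₗ T) :
    detQuotKer f = LinearMap.det f' := by
  let e : (M ⧸ ker f) ≃ₗ[R] N :=
    (Submodule.quotEquivOfEq _ _ hker.symm).trans (T.quotKerEquivOfSurjective hT)
  rw [detQuotKer, ← LinearMap.det_conj _ e]
  congr 1
  ext n
  obtain ⟨m, rfl⟩ := hT n
  have he : e.symm (T m) = Submodule.Quotient.mk m := e.symm_apply_eq.2 rfl
  simp only [LinearMap.coe_comp, Function.comp_apply, LinearEquiv.coe_coe, he]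
  exact LinearMap.congr_fun hTf m

theorem detQuotKer_eq_of_surjective {f : Module.End R M} {f' : Module.End R N} {T : M →ₗ[R] N}
    (hT : Function.Surjective T) (hTf : T ∘ₗ f = f' ∘ₗ T) (hdisj : Disjoint (range f) (ker T)) :
    detQuotKer f = detQuotKer f' := by
  have hTf' : ∀ m, T (f m) = f' (T m) := LinearMap.congr_fun hTf
  refine detQuotKer_eq_det (T := (ker f').mkQ ∘ₗ T)
    ((Submodule.mkQ_surjective _).comp hT) ?_ ?_
  · ext m
    rw [mem_ker, LinearMap.coe_comp, Function.comp_apply, Submodule.mkQ_apply,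
      Submodule.Quotient.mk_eq_zero, mem_ker, mem_ker, ← hTf']
    exact ⟨fun h => (Submodule.disjoint_def.1 hdisj) _ (LinearMap.mem_range_self f m) h,
      fun h => by rw [h, map_zero]⟩
  · ext m
    simp [hTf']

theorem detQuotKer_prodMap (f : Module.End R M) (f' : Module.End R N)
    [Module.Free R (M ⧸ ker f)] [Module.Finite R (M ⧸ ker f)]
    [Module.Free R (N ⧸ ker f')] [Module.Finite R (N ⧸ ker f')] :
    detQuotKer (f.prodMap f') = detQuotKer f * detQuotKer f' := by
  rw [detQuotKer, detQuotKer, detQuotKer, ← LinearMap.det_prodMap]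
  refine detQuotKer_eq_det (T := (ker f).mkQ.prodMap (ker f').mkQ)
    ((Submodule.mkQ_surjective _).prodMap (Submodule.mkQ_surjective _)) ?_ ?_
  · rw [LinearMap.ker_prodMap, LinearMap.ker_prodMap, Submodule.ker_mkQ, Submodule.ker_mkQ]
  · ext <;> simp

theorem detQuotKer_compRight (P : Type*) [AddCommGroup P] [Module R P] [Module.Free R P]
    [Module.Finite R P] [StrongRankCondition R] (f : Module.End R M)
    [Module.Free R (M ⧸ ker f)] [Module.Finite R (M ⧸ ker f)] :
    detQuotKer (LinearMap.compRight R f : Module.End R (P →ₗ[R] M)) =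
      detQuotKer f ^ Module.finrank R P := by
  let b := Module.finBasis R P
  let T : (P →ₗ[R] M) →ₗ[R] (Fin (Module.finrank R P) → M ⧸ ker f) :=
    LinearMap.pi fun i => (ker f).mkQ ∘ₗ LinearMap.applyₗ (b i)
  have hT : Function.Surjective T := fun w => by
    choose w' hw' using fun i => Submodule.mkQ_surjective _ (w i)
    exact ⟨b.constr R w', by ext i; simp [T, ← hw']⟩
  have hker : ker T = ker (LinearMap.compRight R f : Module.End R (P →ₗ[R] M)) := by
    ext Y
    have hb : (∀ i, f (Y (b i)) = 0) ↔ f ∘ₗ Y = 0 :=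
      ⟨fun h => b.ext h, fun h i => LinearMap.congr_fun h (b i)⟩
    simpa [T, funext_iff] using hb
  have hTf : T ∘ₗ LinearMap.compRight R f =
      (LinearMap.pi fun i => quotKerMap f ∘ₗ LinearMap.proj i) ∘ₗ T := rfl
  calc detQuotKer (LinearMap.compRight R f : Module.End R (P →ₗ[R] M))
    _ = LinearMap.det (LinearMap.pi fun i => quotKerMap f ∘ₗ LinearMap.proj i) :=
      detQuotKer_eq_det hT hker hTf
    _ = detQuotKer f ^ Module.finrank R P := by
      simp [LinearMap.det_pi, detQuotKer]

theorem detQuotKer_restrictScalars {S : Type*} [CommRing S] [Algebra S R] [Module.Free S R]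
    [Module S M] [IsScalarTower S R M] (f : Module.End R M) [Module.Free R (M ⧸ ker f)] :
    detQuotKer (f.restrictScalars S) = Algebra.norm S (detQuotKer f) := by
  have hTf : (ker f).mkQ.restrictScalars S ∘ₗ f.restrictScalars S =
    (quotKerMap f).restrictScalars S ∘ₗ (ker f).mkQ.restrictScalars S := rfl
  have hker : ker ((ker f).mkQ.restrictScalars S) = ker (f.restrictScalars S) := by
    rw [LinearMap.ker_restrictScalars, LinearMap.ker_restrictScalars, Submodule.ker_mkQ]
  calc detQuotKer (f.restrictScalars S)
    _ = LinearMap.det ((quotKerMap f).restrictScalars S) :=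
      detQuotKer_eq_det (T := (ker f).mkQ.restrictScalars S) (ker f).mkQ_surjective hker hTf
    _ = Algebra.norm S (detQuotKer f) := LinearMap.det_restrictScalars

end DetQuotKer

section SesquilinearForm

variable {E U V V' : Type*} [Field E] [AddCommGroup U] [Module E U] [AddCommGroup V] [Module E V]
  [AddCommGroup V'] [Module E V'] {σ : E →+* E}

theorem flip_surjective_of_separatingRight [FiniteDimensional E U] {C : U →ₛₗ[σ] U →ₗ[E] E}
    (hC : C.SeparatingRight) : Function.Surjective C.flip := by
  let b := Module.finBasis E U
  let coords : U →ₗ[E] (Fin (Module.finrank E U) → E) := LinearMap.pi fun i => C (b i)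
  have hcoords : Function.Injective coords := by
    refine (injective_iff_map_eq_zero _).2 fun v hv => hC v fun u => ?_
    have : C.flip v = 0 := b.ext (congrFun hv)
    exact LinearMap.congr_fun this u
  have hsurj := (LinearMap.injective_iff_surjective_of_finrank_eq_finrank (by simp)).1 hcoords
  intro φ
  obtain ⟨v, hv⟩ := hsurj fun i => φ (b i)
  exact ⟨v, b.ext (congrFun hv)⟩

theorem exists_adjoint_of_separatingRight [FiniteDimensional E U] {C : U →ₛₗ[σ] U →ₗ[E] E}
    (hC : C.SeparatingRight) (D : V →ₛₗ[σ] V' →ₗ[E] E) (A : U →ₗ[E] V) :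
    ∃ A' : V' →ₗ[E] U, ∀ u v, D (A u) v = C u (A' v) := by
  have hinj : Function.Injective C.flip := (injective_iff_map_eq_zero _).2 fun v hv =>
    hC v (LinearMap.congr_fun hv)
  let e := LinearEquiv.ofBijective C.flip ⟨hinj, flip_surjective_of_separatingRight hC⟩
  refine ⟨e.symm ∘ₗ (D ∘ₛₗ A).flip, fun u v => ?_⟩
  exact (LinearMap.congr_fun (e.apply_symm_apply ((D ∘ₛₗ A).flip v)) u).symm

theorem isCompl_orthogonalBilin {B : V →ₛₗ[σ] V →ₗ[E] E} {W : Submodule E V}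
    [FiniteDimensional E W] (hW : (B.domRestrict₁₂ W W).SeparatingRight) :
    IsCompl W (W.orthogonalBilin B) := by
  obtain ⟨p, hp⟩ := exists_adjoint_of_separatingRight hW B W.subtype
  refine ⟨Submodule.disjoint_def.2 fun w hw hw' => ?_,
    codisjoint_iff.2 (Submodule.eq_top_iff'.2 fun v => ?_)⟩
  · exact congrArg Subtype.val (hW ⟨w, hw⟩ fun u => hw' u u.2)
  · have hv : v - p v ∈ W.orthogonalBilin B := fun u hu => by
      rw [map_sub, sub_eq_zero]
      exact hp ⟨u, hu⟩ v
    exact Submodule.mem_sup.2 ⟨p v, (p v).2, v - p v, hv, add_sub_cancel _ _⟩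

theorem apply_projection_eq_apply_projection {B : V →ₛₗ[σ] V →ₗ[E] E} (hB : B.IsRefl)
    {W : Submodule E V} (hc : IsCompl W (W.orthogonalBilin B)) (u v : V) :
    B (W.projection _ hc u) v = B u (W.projection _ hc v) := by
  have hv : B (W.projection _ hc u) (v - W.projection _ hc v) = 0 :=
    Submodule.sub_projection_mem hc v _ (Submodule.projection_apply_mem hc u)
  have hu : B (u - W.projection _ hc u) (W.projection _ hc v) = 0 :=
    hB _ _ (Submodule.sub_projection_mem hc u _ (Submodule.projection_apply_mem hc v))
  rw [map_sub, sub_eq_zero] at hv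
  rw [map_sub, LinearMap.sub_apply, sub_eq_zero] at hu
  rw [hv, hu]

theorem apply_conj_sub_eq_zero {B : V →ₛₗ[σ] V →ₗ[E] E} {x : V ≃ₗ[E] V}
    (hxB : ∀ u v, B (x u) (x v) = B u v) {W' : Submodule E V} (hxW' : ∀ v ∈ W', x v = v)
    (X : Module.End E V) {u v : V} (hu : u ∈ W') (hv : v ∈ W') :
    B u ((x.conj X - X) v) = 0 := by
  have hx_symm : x.symm v = v := x.symm_apply_eq.2 (hxW' v hv).symm
  have hxu : B u (x (X v)) = B u (X v) := by rw [← hxB u (X v), hxW' u hu]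
  rw [LinearMap.sub_apply, LinearEquiv.conj_apply_apply, hx_symm, map_sub, hxu, sub_self]

end SesquilinearForm

section SkewHermitian

variable (F : Type*) {E V : Type*} [Field F] [Field E] [Algebra F E] [AddCommGroup V] [Module E V]
  [Module F V] [IsScalarTower F E V] {σ : E →ₐ[F] E} (B : V →ₛₗ[(σ : E →+* E)] V →ₗ[E] E)

/-- The Lie algebra `𝔲(V, B)` of the unitary group of the sesquilinear form `B`, as an
`F`-subspace of `End_E V`. -/
def skewHermitian : Submodule F (Module.End E V) where
  carrier := {X | ∀ u v, B (X u) v + B u (X v) = 0}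
  zero_mem' := by simp
  add_mem' {X Y} hX hY u v := by
    simp only [LinearMap.add_apply, map_add]
    linear_combination hX u v + hY u v
  smul_mem' r X hX u v := by
    simp only [LinearMap.smul_apply, ← algebraMap_smul E r, map_smulₛₗ, smul_eq_mul,
      RingHom.coe_coe, RingHom.id_apply, AlgHom.commutes]
    rw [← mul_add, hX, mul_zero]

/-- The skew-hermitian endomorphisms that vanish on `U`. For `U = W^⊥` this is the copy `𝔥` of
`𝔲(W, B|_W)` inside `𝔲(V, B)`. -/
def skewHermitianVanishing (U : Submodule E V) : Submodule F (Module.End E V) :=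
  skewHermitian F B ⊓ ker (LinearMap.lcomp F V U.subtype)

variable {F B} {W : Submodule E V} {X : Module.End E V}

theorem mem_skewHermitian : X ∈ skewHermitian F B ↔ ∀ u v, B (X u) v + B u (X v) = 0 := Iff.rfl

theorem mem_skewHermitianVanishing {U : Submodule E V} :
    X ∈ skewHermitianVanishing F B U ↔ X ∈ skewHermitian F B ∧ ∀ v ∈ U, X v = 0 := by
  simp [skewHermitianVanishing, LinearMap.ext_iff]

theorem sub_mem_skewHermitian_of_adjoint (hB : B.IsSymm) {A A' : Module.End E V}
    (hA : ∀ u v, B (A u) v = B u (A' v)) : A - A' ∈ skewHermitian F B := by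
  intro u v
  have hA' : B u (A v) = B (A' u) v := by rw [← hB.eq, hA, hB.eq]
  simp only [LinearMap.sub_apply, map_sub, hA, hA']
  ring

theorem projection_comp_comp_projection_mem (hB : B.IsRefl)
    (hc : IsCompl W (W.orthogonalBilin B)) (hX : X ∈ skewHermitian F B) :
    W.projection _ hc ∘ₗ X ∘ₗ W.projection _ hc ∈
      skewHermitianVanishing F B (W.orthogonalBilin B) := by
  refine mem_skewHermitianVanishing.2 ⟨fun u v => ?_, fun v hv => ?_⟩
  · simp only [LinearMap.comp_apply]
    rw [apply_projection_eq_apply_projection hB, ← apply_projection_eq_apply_projection hB hc u]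
    exact hX _ _
  · simp [(Submodule.projection_apply_eq_zero_iff hc).2 hv]

/-- The block `p X p` of a skew-hermitian `X`, for `p` the orthogonal projection onto `W`. -/
noncomputable def diagonalBlock (hB : B.IsRefl) (hc : IsCompl W (W.orthogonalBilin B)) :
    skewHermitian F B →ₗ[F] skewHermitianVanishing F B (W.orthogonalBilin B) :=
  (LinearMap.compRight F (W.projection _ hc) ∘ₗ LinearMap.lcomp F V (W.projection _ hc) ∘ₗ
    (skewHermitian F B).subtype).codRestrict _
      fun X => projection_comp_comp_projection_mem hB hc X.2

/-- The block `W^⊥ → W` of a skew-hermitian endomorphism. -/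
noncomputable def offDiagonalBlock (hc : IsCompl W (W.orthogonalBilin B)) :
    skewHermitian F B →ₗ[F] (W.orthogonalBilin B →ₗ[E] W) :=
  LinearMap.compRight F (W.projectionOnto _ hc) ∘ₗ
    LinearMap.lcomp F V (W.orthogonalBilin B).subtype ∘ₗ (skewHermitian F B).subtype

theorem coe_diagonalBlock_apply (hB : B.IsRefl) (hc : IsCompl W (W.orthogonalBilin B))
    (X : skewHermitian F B) (v : V) :
    (diagonalBlock hB hc X : Module.End E V) v =
      W.projection _ hc ((X : Module.End E V) (W.projection _ hc v)) := rfl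

theorem offDiagonalBlock_apply (hc : IsCompl W (W.orthogonalBilin B)) (X : skewHermitian F B)
    (v : W.orthogonalBilin B) :
    offDiagonalBlock hc X v = W.projectionOnto _ hc ((X : Module.End E V) v) := rfl

theorem projection_apply_projection_of_mem (hB : B.IsRefl) (hBsep : B.SeparatingRight)
    (hc : IsCompl W (W.orthogonalBilin B))
    (hX : X ∈ skewHermitianVanishing F B (W.orthogonalBilin B)) (v : V) :
    W.projection _ hc (X (W.projection _ hc v)) = X v := by
  obtain ⟨hskew, hvanish⟩ := mem_skewHermitianVanishing.1 hX
  have hX_projection (u : V) : X (W.projection _ hc u) = X u := by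
    have := hvanish _ (Submodule.sub_projection_mem hc u)
    rwa [map_sub, sub_eq_zero, eq_comm] at this
  rw [hX_projection, ← sub_eq_zero]
  refine hBsep _ fun u => ?_
  have hproj := hskew (W.projection _ hc u) v
  rw [hX_projection, apply_projection_eq_apply_projection hB] at hproj
  rw [map_sub]
  linear_combination hproj - hskew u v

theorem exists_diagonalBlock_eq_offDiagonalBlock_eq [FiniteDimensional E V] (hB : B.IsSymm)
    (hBsep : B.SeparatingRight) (hc : IsCompl W (W.orthogonalBilin B))
    (Z : skewHermitianVanishing F B (W.orthogonalBilin B)) (Y : W.orthogonalBilin B →ₗ[E] W) :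
    ∃ X, diagonalBlock hB.isRefl hc X = Z ∧ offDiagonalBlock hc X = Y := by
  let A : Module.End E V := W.subtype ∘ₗ Y ∘ₗ (W.orthogonalBilin B).projectionOnto W hc.symm
  obtain ⟨A', hA'⟩ := exists_adjoint_of_separatingRight hBsep B A
  have hA_of_mem : ∀ w ∈ W, A w = 0 := fun w hw => by
    simp [A, Submodule.projectionOnto_apply_eq_zero_iff hc.symm |>.2 hw]
  have hA'_mem : ∀ v, A' v ∈ W.orthogonalBilin B := fun v w hw => by
    rw [← hA', hA_of_mem w hw, map_zero, LinearMap.zero_apply]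
  have hA'_of_mem : ∀ v ∈ W.orthogonalBilin B, A' v = 0 := fun v hv => hBsep _ fun u => by
    rw [← hA']
    exact hv _ (Submodule.coe_mem _)
  obtain ⟨hZ, hZ_of_mem⟩ := mem_skewHermitianVanishing.1 Z.2
  refine ⟨⟨_, add_mem hZ (sub_mem_skewHermitian_of_adjoint hB hA')⟩, ?_, ?_⟩
  · ext v
    rw [coe_diagonalBlock_apply, LinearMap.add_apply, LinearMap.sub_apply,
      hA_of_mem _ (Submodule.projection_apply_mem hc v), zero_sub, map_add, map_neg,
      (Submodule.projection_apply_eq_zero_iff hc).2 (hA'_mem _), neg_zero, add_zero,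
      projection_apply_projection_of_mem hB.isRefl hBsep hc Z.2]
  · refine LinearMap.ext fun v => ?_
    rw [offDiagonalBlock_apply, LinearMap.add_apply, LinearMap.sub_apply, hZ_of_mem v v.2,
      hA'_of_mem v v.2, zero_add, sub_zero]
    simp [A]

theorem eq_zero_of_diagonalBlock_eq_zero (hB : B.IsRefl) (hBsep : B.SeparatingRight)
    (hc : IsCompl W (W.orthogonalBilin B)) {X : skewHermitian F B}
    (hdiag : diagonalBlock hB hc X = 0) (hoff : offDiagonalBlock hc X = 0)
    (horth : ∀ u ∈ W.orthogonalBilin B, ∀ v ∈ W.orthogonalBilin B,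
      B u ((X : Module.End E V) v) = 0) :
    X = 0 := by
  have hX_mem (v : V) : (X : Module.End E V) v ∈ W.orthogonalBilin B := by
    rw [← sub_add_cancel v (W.projection _ hc v), map_add]
    refine add_mem ?_ ?_
    · rw [← Submodule.projectionOnto_apply_eq_zero_iff hc]
      exact LinearMap.congr_fun hoff ⟨_, Submodule.sub_projection_mem hc v⟩
    · rw [← Submodule.projection_apply_eq_zero_iff hc, ← coe_diagonalBlock_apply hB, hdiag]
      rfl
  have hX_of_mem : ∀ w ∈ W, (X : Module.End E V) w = 0 := fun w hw => hBsep _ fun u => by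
    have := mem_skewHermitian.1 X.2 u w
    rwa [hB _ _ (hX_mem u w hw), zero_add] at this
  ext v
  refine hBsep _ fun u => ?_
  rw [← sub_add_cancel v (W.projection _ hc v), map_add,
    hX_of_mem _ (Submodule.projection_apply_mem hc v), add_zero,
    ← sub_add_cancel u (W.projection _ hc u), map_add, LinearMap.add_apply,
    hX_mem _ _ (Submodule.projection_apply_mem hc u), add_zero]
  exact horth _ (Submodule.sub_projection_mem hc u) _ (Submodule.sub_projection_mem hc v)

end SkewHermitian

section AdSubOne

theorem projection_apply_comm_of_mapsTo {R V : Type*} [Ring R] [AddCommGroup V] [Module R V]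
    {W W' : Submodule R V} (hc : IsCompl W W') {f : Module.End R V} (hW : Set.MapsTo f W W)
    (hW' : Set.MapsTo f W' W') (v : V) :
    W.projection W' hc (f v) = f (W.projection W' hc v) := by
  have hcomm : Commute (W.projection W' hc) f :=
    (LinearMap.IsIdempotentElem.commute_iff (Submodule.isIdempotentElem_projection hc)).2
      ⟨by rwa [Submodule.range_projection], by rwa [Submodule.ker_projection]⟩
  exact LinearMap.congr_fun hcomm.eq v

variable {F E V : Type*} [Field F] [Field E] [Algebra F E] [AddCommGroup V] [Module E V]
  [Module F V] [IsScalarTower F E V] {σ : E →ₐ[F] E} {B : V →ₛₗ[(σ : E →+* E)] V →ₗ[E] E}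
  {W : Submodule E V} {x : V ≃ₗ[E] V}

theorem diagonalBlock_conj_sub (hB : B.IsRefl) (hc : IsCompl W (W.orthogonalBilin B))
    (hx : ∀ v, W.projection _ hc (x v) = x (W.projection _ hc v)) {X X₁ : skewHermitian F B}
    (hX₁ : (X₁ : Module.End E V) = x.conj X - X) :
    (diagonalBlock hB hc X₁ : Module.End E V) =
      x.conj (diagonalBlock hB hc X) - diagonalBlock hB hc X := by
  ext v
  have hx_symm : W.projection _ hc (x.symm v) = x.symm (W.projection _ hc v) := by
    rw [x.eq_symm_apply, ← hx, x.apply_symm_apply]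
  simp only [coe_diagonalBlock_apply, hX₁, LinearMap.sub_apply, LinearEquiv.conj_apply_apply,
    map_sub, hx, hx_symm]

theorem offDiagonalBlock_conj_sub (hc : IsCompl W (W.orthogonalBilin B))
    (hx : ∀ v, W.projection _ hc (x v) = x (W.projection _ hc v))
    (hxW' : ∀ v ∈ W.orthogonalBilin B, x v = v) {ψ : Module.End E W}
    (hψ : ∀ u : W, (ψ u : V) = x u - u) {X X₁ : skewHermitian F B}
    (hX₁ : (X₁ : Module.End E V) = x.conj X - X) :
    offDiagonalBlock hc X₁ = ψ ∘ₗ offDiagonalBlock hc X := by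
  ext v
  have hx_symm : x.symm (v : V) = v := x.symm_apply_eq.2 (hxW' v v.2).symm
  simp only [offDiagonalBlock_apply, LinearMap.comp_apply, hψ, hX₁, LinearMap.sub_apply,
    LinearEquiv.conj_apply_apply, hx_symm, Submodule.coe_projectionOnto_apply, map_sub, hx,
    AddSubgroupClass.coe_sub]

theorem detQuotKer_skewHermitian_eq [FiniteDimensional F E] [FiniteDimensional E V]
    (hB : B.IsSymm) (hBsep : B.SeparatingRight) (hW : (B.domRestrict₁₂ W W).SeparatingRight)
    (hxB : ∀ u v, B (x u) (x v) = B u v) (hxW' : ∀ v ∈ W.orthogonalBilin B, x v = v)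
    {Φg : Module.End F (skewHermitian F B)}
    (hΦg : ∀ X, (Φg X : Module.End E V) = x.conj X - X)
    {Φh : Module.End F (skewHermitianVanishing F B (W.orthogonalBilin B))}
    (hΦh : ∀ X, (Φh X : Module.End E V) = x.conj X - X)
    {ψ : Module.End E W} (hψ : ∀ u : W, (ψ u : V) = x u - u) :
    detQuotKer Φg = detQuotKer Φh *
      Algebra.norm F (detQuotKer ψ) ^ Module.finrank E (W.orthogonalBilin B) := by
  have hc := isCompl_orthogonalBilin hW
  have hx : ∀ v, W.projection _ hc (x v) = x (W.projection _ hc v) :=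
    projection_apply_comm_of_mapsTo (f := x) hc
      (fun w hw => (W.sub_mem_iff_left hw).1 (hψ ⟨w, hw⟩ ▸ Submodule.coe_mem _))
      (fun v hv => (hxW' v hv).symm ▸ hv)
  let blocks := (diagonalBlock (F := F) hB.isRefl hc).prod (offDiagonalBlock hc)
  let postcompψ : Module.End E (W.orthogonalBilin B →ₗ[E] W) := LinearMap.compRight E ψ
  have hsurj : Function.Surjective blocks := fun ZY =>
    (exists_diagonalBlock_eq_offDiagonalBlock_eq hB hBsep hc ZY.1 ZY.2).imp
      fun X hX => Prod.ext hX.1 hX.2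
  have hcomm : blocks ∘ₗ Φg = Φh.prodMap (postcompψ.restrictScalars F) ∘ₗ blocks :=
    LinearMap.ext fun X => Prod.ext
      (Subtype.ext <| (diagonalBlock_conj_sub hB.isRefl hc hx (hΦg X)).trans (hΦh _).symm)
      (offDiagonalBlock_conj_sub hc hx hxW' hψ (hΦg X))
  have hdisj : Disjoint (range Φg) (ker blocks) := by
    rw [Submodule.disjoint_def]
    rintro _ ⟨X, rfl⟩ hX
    exact eq_zero_of_diagonalBlock_eq_zero hB.isRefl hBsep hc (congrArg Prod.fst hX)
      (congrArg Prod.snd hX) fun u hu v hv =>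
        hΦg X ▸ apply_conj_sub_eq_zero hxB hxW' X hu hv
  have : FiniteDimensional F V := Module.Finite.trans E V
  have : FiniteDimensional F (Module.End E V) := Module.Finite.trans E _
  have : FiniteDimensional F (W.orthogonalBilin B →ₗ[E] W) := Module.Finite.trans E _
  rw [detQuotKer_eq_of_surjective hsurj hcomm hdisj, detQuotKer_prodMap,
    detQuotKer_restrictScalars, detQuotKer_compRight, map_pow]

end AdSubOne

theorem stmt_2_general (F E : Type*) [Field F] [Field E] [Algebra F E] [FiniteDimensional F E]
    (σ : E →ₐ[F] E)
    (V : Type*) [AddCommGroup V] [Module E V] [Module F V] [IsScalarTower F E V]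
    [FiniteDimensional E V]
    (hm : V → V → E)
    (haddl : ∀ u u' v : V, hm (u + u') v = hm u v + hm u' v)
    (hsmull : ∀ (a : E) (u v : V), hm (a • u) v = a * hm u v)
    (hconj : ∀ u v : V, hm v u = σ (hm u v))
    (hnd : ∀ u : V, (∀ v : V, hm u v = 0) → u = 0)
    (W : Submodule E V)
    (hWnd : ∀ u ∈ W, (∀ v ∈ W, hm u v = 0) → u = 0)
    (W' : Submodule E V)
    (hW' : ∀ v : V, v ∈ W' ↔ ∀ u ∈ W, hm v u = 0)
    (x : V ≃ₗ[E] V)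
    (hxh : ∀ u v : V, hm (x u) (x v) = hm u v)
    (hxW' : ∀ v ∈ W', x v = v)
    (g h : Submodule F (Module.End E V))
    (hgmem : ∀ X : Module.End E V, X ∈ g ↔ ∀ u v : V, hm (X u) v + hm u (X v) = 0)
    (hhmem : ∀ X : Module.End E V, X ∈ h ↔
      (∀ u v : V, hm (X u) v + hm u (X v) = 0) ∧ ∀ v ∈ W', X v = 0)
    (Φg : g →ₗ[F] g)
    (hΦg : ∀ X : g, (↑(Φg X) : Module.End E V) =
      ((x : V →ₗ[E] V) ∘ₗ (↑X : Module.End E V) ∘ₗ (x.symm : V →ₗ[E] V)) -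
        (↑X : Module.End E V))
    (Φh : h →ₗ[F] h)
    (hΦh : ∀ X : h, (↑(Φh X) : Module.End E V) =
      ((x : V →ₗ[E] V) ∘ₗ (↑X : Module.End E V) ∘ₗ (x.symm : V →ₗ[E] V)) -
        (↑X : Module.End E V))
    (ψ : W →ₗ[E] W)
    (hψ : ∀ u : W, (↑(ψ u) : V) = x ↑u - ↑u)
    (qg : (g ⧸ LinearMap.ker Φg) →ₗ[F] (g ⧸ LinearMap.ker Φg))
    (hqg : ∀ X : g, qg (Submodule.Quotient.mk X) = Submodule.Quotient.mk (Φg X))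
    (qh : (h ⧸ LinearMap.ker Φh) →ₗ[F] (h ⧸ LinearMap.ker Φh))
    (hqh : ∀ X : h, qh (Submodule.Quotient.mk X) = Submodule.Quotient.mk (Φh X))
    (qψ : (W ⧸ LinearMap.ker ψ) →ₗ[E] (W ⧸ LinearMap.ker ψ))
    (hqψ : ∀ u : W, qψ (Submodule.Quotient.mk u) = Submodule.Quotient.mk (ψ u)) :
    LinearMap.det qg =
      LinearMap.det qh * Algebra.norm F (LinearMap.det qψ) ^ Module.finrank E W' := by
  -- Mathlib's sesquilinear maps are semilinear in the first variable, so `B u v = hm v u`.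
  let B : V →ₛₗ[(σ : E →+* E)] V →ₗ[E] E := LinearMap.mk₂'ₛₗ _ _ (fun v u => hm u v)
    (fun v v' u => by rw [hconj, haddl, map_add, ← hconj, ← hconj])
    (fun a v u => by rw [hconj, hsmull, map_mul, ← hconj]; rfl)
    (fun v u u' => haddl u u' v) (fun a v u => hsmull a u v)
  have hB : B.IsSymm := ⟨fun v u => (hconj u v).symm⟩
  have hBW : (B.domRestrict₁₂ W W).SeparatingRight := fun u hu =>
    Subtype.ext <| hWnd u u.2 fun v hv => hu ⟨v, hv⟩
  obtain rfl : W' = W.orthogonalBilin B := Submodule.ext hW'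
  have hskew (X : Module.End E V) :
      X ∈ skewHermitian F B ↔ ∀ u v, hm (X u) v + hm u (X v) = 0 := by
    rw [mem_skewHermitian, forall_comm]
    simp only [add_comm]
    rfl
  obtain rfl : g = skewHermitian F B := Submodule.ext fun X => (hgmem X).trans (hskew X).symm
  obtain rfl : h = skewHermitianVanishing F B (W.orthogonalBilin B) := Submodule.ext fun X => by
    rw [hhmem, mem_skewHermitianVanishing, hskew]
  rw [det_eq_detQuotKer hqg, det_eq_detQuotKer hqh, det_eq_detQuotKer hqψ]
  exact detQuotKer_skewHermitian_eq hB hnd hBW (fun u v => hxh v u) hxW' hΦg hΦh hψ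

/-- the identity `D^G(x) = D^H(x) Δ(x)^k` for a semisimple unitary element
`x` acting trivially on `W' = W^⊥`: the determinant of `Ad(x) − id` on `𝔤/𝔤_x` equals the
determinant of `Ad(x) − id` on `𝔥/𝔥_x` times `N_{E/F}(det((x − 1)|_{W/ker}))^k`. -/
theorem stmt_2 (F E : Type*) [Field F] [CharZero F] [Field E] [Algebra F E]
    (hquad : Module.finrank F E = 2)
    (σ : E ≃ₐ[F] E) (hσnt : ∃ x : E, σ x ≠ x)
    (V : Type*) [AddCommGroup V] [Module E V] [Module F V] [IsScalarTower F E V]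
    [FiniteDimensional E V]
    (hm : V → V → E)
    (haddl : ∀ u u' v : V, hm (u + u') v = hm u v + hm u' v)
    (hsmull : ∀ (a : E) (u v : V), hm (a • u) v = a * hm u v)
    (hconj : ∀ u v : V, hm v u = σ (hm u v))
    (hnd : ∀ u : V, (∀ v : V, hm u v = 0) → u = 0)
    (W : Submodule E V)
    (hWnd : ∀ u ∈ W, (∀ v ∈ W, hm u v = 0) → u = 0)
    (W' : Submodule E V)
    (hW' : ∀ v : V, v ∈ W' ↔ ∀ u ∈ W, hm v u = 0)
    (x : V ≃ₗ[E] V)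
    (hxh : ∀ u v : V, hm (x u) (x v) = hm u v)
    (hxss : Squarefree (minpoly E (x : V →ₗ[E] V)))
    (hxW' : ∀ v ∈ W', x v = v)
    (g h : Submodule F (Module.End E V))
    (hgmem : ∀ X : Module.End E V, X ∈ g ↔ ∀ u v : V, hm (X u) v + hm u (X v) = 0)
    (hhmem : ∀ X : Module.End E V, X ∈ h ↔
      (∀ u v : V, hm (X u) v + hm u (X v) = 0) ∧ ∀ v ∈ W', X v = 0)
    (Φg : g →ₗ[F] g)
    (hΦg : ∀ X : g, (↑(Φg X) : Module.End E V) =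
      ((x : V →ₗ[E] V) ∘ₗ (↑X : Module.End E V) ∘ₗ (x.symm : V →ₗ[E] V)) -
        (↑X : Module.End E V))
    (Φh : h →ₗ[F] h)
    (hΦh : ∀ X : h, (↑(Φh X) : Module.End E V) =
      ((x : V →ₗ[E] V) ∘ₗ (↑X : Module.End E V) ∘ₗ (x.symm : V →ₗ[E] V)) -
        (↑X : Module.End E V))
    (ψ : W →ₗ[E] W)
    (hψ : ∀ u : W, (↑(ψ u) : V) = x ↑u - ↑u)
    (qg : (g ⧸ LinearMap.ker Φg) →ₗ[F] (g ⧸ LinearMap.ker Φg))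
    (hqg : ∀ X : g, qg (Submodule.Quotient.mk X) = Submodule.Quotient.mk (Φg X))
    (qh : (h ⧸ LinearMap.ker Φh) →ₗ[F] (h ⧸ LinearMap.ker Φh))
    (hqh : ∀ X : h, qh (Submodule.Quotient.mk X) = Submodule.Quotient.mk (Φh X))
    (qψ : (W ⧸ LinearMap.ker ψ) →ₗ[E] (W ⧸ LinearMap.ker ψ))
    (hqψ : ∀ u : W, qψ (Submodule.Quotient.mk u) = Submodule.Quotient.mk (ψ u)) :
    LinearMap.det qg =
      LinearMap.det qh * Algebra.norm F (LinearMap.det qψ) ^ Module.finrank E W' := by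
  have : FiniteDimensional F E := Module.finite_of_finrank_pos (by omega)
  exact stmt_2_general F E (σ : E →ₐ[F] E) V hm haddl hsmull hconj hnd W hWnd W' hW' x hxh hxW'
    g h hgmem hhmem Φg hΦg Φh hΦh ψ hψ qg hqg qh hqh qψ hqψ
end

section
/- Assume l ≥ 1. There exist a compact subset C₂ of G₀ and a constant c₀ ≥ 0 such that for every h ∈ H and every λ ∈ O_E ∖ {0}, there exists h' ∈ h · (a(λ) C₂ a(λ)^{−1} ∩ H) with val_{R₁}(h'|_W) ≥ val_{R₁}(h'(w₁)) − val_E(λ) − c₀. -/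
/-! Common setup for the p-adic statements.  `E` is a nonarchimedean local field of
characteristic zero (a complete, nontrivially normed field with ultrametric norm,
compact unit ball, and discrete valuation `valE` normalized at a uniformizer `πE`),
`σ` is an involution of `E`, and `(V₀, h)` is a hermitian space over `E` relative
to `σ`.  The unitary group `G₀` is realized inside the continuous linear
endomorphisms of `V₀`. -/

section PadSetup

variable (E : Type*) [NontriviallyNormedField E]
variable (V₀ : Type*) [NormedAddCommGroup V₀] [NormedSpace E V₀]

/-- The unitary group `G₀ = U(V₀, h)`. -/
def PadG (h : V₀ → V₀ → E) : Set (V₀ →L[E] V₀) :=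
  {g | Function.Bijective (⇑g) ∧ ∀ u v : V₀, h (g u) (g v) = h u v}

/-- The subgroup `H` of `G₀` fixing `w₀` (the unitary group of `W = (Ew₀)^⊥`). -/
def PadH (h : V₀ → V₀ → E) (w₀ : V₀) : Set (V₀ →L[E] V₀) :=
  {g | g ∈ PadG E V₀ h ∧ g w₀ = w₀}

/-- The anisotropic kernel `V_{an,0}`: the orthogonal complement of the hyperbolic
space `⊕ᵢ (Euᵢ ⊕ Eu₋ᵢ)`, where `u±ᵢ = w_{2i−2} ± w_{2i−1}` for `1 ≤ i ≤ r₀ = ⌊(l+1)/2⌋`. -/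
def PadVan (h : V₀ → V₀ → E) (l : ℕ) (w : ℕ → V₀) : Set V₀ :=
  {v | ∀ i : ℕ, 1 ≤ i → i ≤ (l + 1) / 2 →
    h v (w (2 * i - 2) + w (2 * i - 1)) = 0 ∧ h v (w (2 * i - 2) - w (2 * i - 1)) = 0}

/-- `R_{an,0} = {v ∈ V_{an,0} : val_E h(v,v) ≥ val_E ν₀ − 1}`. -/
def PadRan (h : V₀ → V₀ → E) (l : ℕ) (w : ℕ → V₀) (valE : E → ℤ) (ν₀ : E) : Set V₀ :=
  {v | v ∈ PadVan E V₀ h l w ∧ (v = 0 ∨ valE ν₀ - 1 ≤ valE (h v v))}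

/-- The lattice `R₀ = O_E u₁ + O_E u₋₁ + … + O_E u_{r₀} + O_E u₋_{r₀} + R_{an,0}`. -/
def PadR0 (h : V₀ → V₀ → E) (l : ℕ) (w : ℕ → V₀) (valE : E → ℤ) (ν₀ : E) : Set V₀ :=
  {v | ∃ (a b : ℕ → E) (x : V₀), x ∈ PadRan E V₀ h l w valE ν₀ ∧
    (∀ i, ‖a i‖ ≤ 1) ∧ (∀ i, ‖b i‖ ≤ 1) ∧
    v = (∑ i ∈ Finset.Icc 1 ((l + 1) / 2), a i • (w (2 * i - 2) + w (2 * i - 1))) +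
      (∑ i ∈ Finset.Icc 1 ((l + 1) / 2), b i • (w (2 * i - 2) - w (2 * i - 1))) + x}

end PadSetup

section PadSetup2

variable (E : Type*) [NontriviallyNormedField E]
variable (V₀ : Type*) [NormedAddCommGroup V₀] [NormedSpace E V₀]

/-- The lattice `R₁ = O_E w₁ ⊕ … ⊕ O_E w_l ⊕ R_{♯,H}` in `W`. -/
def PadR1 (l : ℕ) (w : ℕ → V₀) (Rsharp : Set V₀) : Set V₀ :=
  {v | ∃ b : ℕ → E, (∀ i, ‖b i‖ ≤ 1) ∧
    ∃ x ∈ Rsharp, v = (∑ i ∈ Finset.Icc 1 l, b i • w i) + x}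

end PadSetup2

/-!
For vectors `y` and `z`, the operator `v ↦ B v z • y - B v y • z` is skew-adjoint, so its Cayley
transform is an isometry. If `y` is orthogonal to `w₀` and `w₁`, conjugation by `a(λ)` carries the
operator of `y` and `a(λ)⁻¹ (λ w₁)`, which stays bounded for `‖λ‖ ≤ 1`, to the operator of `y` and
`λ w₁`. Hence the Cayley transforms `k` of the latter are conjugates of elements of one compact
set, and they fix `w₀`. The sum and the difference of the images `k w₁` for `y` and `-y` are
essentially multiples of `w₁` and of `λ y`, so for one of the two signs `‖g (k w₁)‖` is at least a
constant times `‖λ‖ max ‖g w₁‖ ‖g y‖`. Choosing `y` so that `‖g y‖` nearly realizes the operator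
norm of `g` on the orthogonal complement of `w₀` and `w₁`, this bounds `‖λ‖ ‖g (k x)‖` for every
`x` orthogonal to `w₀`. Comparing the lattice `R₁` with the unit ball of `W` turns the estimate
into one of valuations.
-/

open Filter Metric Set Topology

section CayleyTransform

/-- The Cayley transform `(1 + x) (1 - x)⁻¹`. Through `Ring.inverse` it takes the junk value `0`
where `1 - x` is not invertible. -/
noncomputable def cayleyTransform {R : Type*} [Ring R] (x : R) : R := (1 + x) * Ring.inverse (1 - x)

section Ring

variable {R : Type*} [Ring R] {x : R}

lemma cayleyTransform_mul_one_sub (hx : IsUnit (1 - x)) : cayleyTransform x * (1 - x) = 1 + x :=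
  Ring.inverse_mul_cancel_right _ _ hx

lemma units_conj_cayleyTransform (t : Rˣ) (x : R) :
    t * cayleyTransform x * t⁻¹ = cayleyTransform (t * x * t⁻¹ : R) := by
  have hadd : 1 + (t * x * t⁻¹ : R) = t * (1 + x) * t⁻¹ := by simp [mul_add, add_mul]
  have hsub : 1 - (t * x * t⁻¹ : R) = t * (1 - x) * t⁻¹ := by simp [mul_sub, sub_mul]
  rw [cayleyTransform, cayleyTransform, hadd, hsub, Ring.inverse_mul (.inr t⁻¹.isUnit),
    Ring.inverse_mul (.inl t.isUnit), Ring.inverse_unit, Ring.inverse_unit]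
  simp [mul_assoc]

end Ring

section NormedRing

variable {R : Type*} [NormedRing R] [HasSummableGeomSeries R] {x : R}

lemma isUnit_cayleyTransform (hx : ‖x‖ < 1) : IsUnit (cayleyTransform x) := by
  have hadd : IsUnit (1 + x) := by
    simpa using isUnit_one_sub_of_norm_lt_one (x := -x) (by simpa using hx)
  exact hadd.mul (isUnit_one_sub_of_norm_lt_one hx).ringInverse

lemma continuousOn_cayleyTransform : ContinuousOn (cayleyTransform : R → R) (ball 0 1) := by
  intro x hx
  obtain ⟨u, hu⟩ := isUnit_one_sub_of_norm_lt_one (mem_ball_zero_iff.mp hx)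
  have hinv : ContinuousAt Ring.inverse (1 - x) := hu ▸ NormedRing.inverse_continuousAt u
  have hsub : ContinuousAt (fun y : R => 1 - y) x := by fun_prop
  exact ((by fun_prop : ContinuousAt (fun y : R => 1 + y) x).mul
    (hinv.comp (f := fun y : R => 1 - y) hsub)).continuousWithinAt

lemma norm_cayleyTransform_le (hx : ‖x‖ < 1) :
    ‖cayleyTransform x‖ ≤ (‖(1 : R)‖ + ‖x‖) / (1 - ‖x‖) := by
  have hrec : cayleyTransform x = 1 + x + cayleyTransform x * x := by
    rw [← cayleyTransform_mul_one_sub (isUnit_one_sub_of_norm_lt_one hx)]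
    noncomm_ring
  have hle : ‖cayleyTransform x‖ ≤ ‖(1 : R)‖ + ‖x‖ + ‖cayleyTransform x‖ * ‖x‖ := by
    conv_lhs => rw [hrec]
    exact (norm_add_le _ _).trans (add_le_add (norm_add_le _ _) (norm_mul_le _ _))
  rw [le_div_iff₀ (by linarith)]
  linarith

end NormedRing

end CayleyTransform

lemma norm_le_of_smul_eq_add_of_smul_eq_sub {E F : Type*} [NormedField E]
    [SeminormedAddCommGroup F] [NormedSpace E F] {q t : E} {a b u v : F}
    (hu : (1 + q) • u = (1 - q) • a + t • b) (hv : (1 + q) • v = (1 - q) • a - t • b)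
    (hq : ‖q‖ ≤ 1 / 2) :
    ‖(2 : E)‖ * ‖a‖ ≤ 3 * (‖u‖ + ‖v‖) ∧ ‖2 * t‖ * ‖b‖ ≤ 3 / 2 * (‖u‖ + ‖v‖) := by
  have hadd : ‖1 + q‖ ≤ 3 / 2 := by linarith [norm_add_le 1 q, norm_one (α := E)]
  have hsub : 1 / 2 ≤ ‖1 - q‖ := by linarith [norm_sub_norm_le 1 q, norm_one (α := E)]
  have hb : ‖2 * t‖ * ‖b‖ ≤ 3 / 2 * (‖u‖ + ‖v‖) :=
    calc ‖2 * t‖ * ‖b‖ = ‖1 + q‖ * ‖u - v‖ := by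
          rw [← norm_smul, ← norm_smul, smul_sub, hu, hv]
          congr 1
          module
      _ ≤ 3 / 2 * (‖u‖ + ‖v‖) := by
          gcongr
          exact norm_sub_le _ _
  have ha : ‖(2 : E)‖ * (1 / 2 * ‖a‖) ≤ 3 / 2 * (‖u‖ + ‖v‖) :=
    calc ‖(2 : E)‖ * (1 / 2 * ‖a‖) ≤ ‖(2 : E)‖ * (‖1 - q‖ * ‖a‖) := by gcongr
      _ = ‖1 + q‖ * ‖u + v‖ := by
          rw [← norm_smul, ← norm_smul, ← norm_smul, smul_add, hu, hv]
          congr 1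
          module
      _ ≤ 3 / 2 * (‖u‖ + ‖v‖) := by
          gcongr
          exact norm_add_le _ _
  exact ⟨by linarith, hb⟩

section SesquilinearForm

variable {E V : Type*} [NontriviallyNormedField E] [NormedAddCommGroup V] [NormedSpace E V]
  {σ : E →+* E} {B : V →L[E] V →SL[σ] E}

/-- The sesquilinear form `B` is hermitian relative to `σ`. -/
def IsHermitianForm (B : V →L[E] V →SL[σ] E) : Prop := ∀ u v, B v u = σ (B u v)

lemma IsHermitianForm.eq_zero_comm (hB : IsHermitianForm B) {u v : V} : B u v = 0 ↔ B v u = 0 :=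
  ⟨fun h => by rw [hB u v, h, map_zero], fun h => by rw [hB v u, h, map_zero]⟩

/-- The subspace of vectors `v` with `B v w = 0` for all `w ∈ s`. -/
def leftOrthogonal (B : V →L[E] V →SL[σ] E) (s : Set V) : Submodule E V where
  carrier := {v | ∀ w ∈ s, B v w = 0}
  add_mem' hu hv w hw := by rw [map_add, add_apply, hu w hw, hv w hw, add_zero]
  zero_mem' w _ := by rw [map_zero, zero_apply]
  smul_mem' a v hv w hw := by rw [map_smul, smul_apply, hv w hw, smul_zero]

lemma mem_leftOrthogonal {s : Set V} {v : V} : v ∈ leftOrthogonal B s ↔ ∀ w ∈ s, B v w = 0 :=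
  Iff.rfl

lemma mem_leftOrthogonal_singleton {v w : V} : v ∈ leftOrthogonal B {w} ↔ B v w = 0 := by
  simp [mem_leftOrthogonal]

lemma mem_leftOrthogonal_pair {v w₀ w₁ : V} :
    v ∈ leftOrthogonal B {w₀, w₁} ↔ B v w₀ = 0 ∧ B v w₁ = 0 := by
  simp [mem_leftOrthogonal]

lemma mem_leftOrthogonal_image_Iic {v : V} {w : ℕ → V} {l : ℕ} :
    v ∈ leftOrthogonal B (w '' Iic l) ↔ B v (w 0) = 0 ∧ ∀ i, 1 ≤ i → i ≤ l → B v (w i) = 0 := by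
  simp only [mem_leftOrthogonal, forall_mem_image, mem_Iic]
  refine ⟨fun hv => ⟨hv l.zero_le, fun i _ => hv (x := i)⟩, fun ⟨hv₀, hv⟩ i hi => ?_⟩
  rcases i.eq_zero_or_pos with rfl | hi0
  exacts [hv₀, hv i hi0 hi]

/-- The operators that are skew-adjoint for `B`, that is, the Lie algebra of the unitary group. -/
def skewAdjointOperators (B : V →L[E] V →SL[σ] E) : Set (V →L[E] V) :=
  {X | ∀ u v, B (X u) v + B u (X v) = 0}

lemma isClosed_skewAdjointOperators : IsClosed (skewAdjointOperators B) := by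
  simp only [skewAdjointOperators, ofPred_forall]
  refine isClosed_iInter fun u => isClosed_iInter fun v => isClosed_eq ?_ continuous_const
  fun_prop

lemma mapsTo_leftOrthogonal_of_mem_PadH {g : V →L[E] V} {w₀ : V} (hg : g ∈ PadH E V (B · ·) w₀) :
    MapsTo g (leftOrthogonal B {w₀}) (leftOrthogonal B {w₀}) := by
  intro x hx
  rw [SetLike.mem_coe, mem_leftOrthogonal_singleton] at hx ⊢
  have hgx : B (g x) (g w₀) = B x w₀ := hg.1.2 x w₀
  rwa [hg.2, hx] at hgx

lemma cayleyTransform_mem_PadG [CompleteSpace V] {X : V →L[E] V} (hX : X ∈ skewAdjointOperators B)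
    (hX1 : ‖X‖ < 1) : cayleyTransform X ∈ PadG E V (B · ·) := by
  have hunit : IsUnit (1 - X) := isUnit_one_sub_of_norm_lt_one hX1
  refine ⟨ContinuousLinearMap.isUnit_iff_bijective.mp (isUnit_cayleyTransform hX1), fun u v => ?_⟩
  obtain ⟨u, rfl⟩ := (ContinuousLinearMap.isUnit_iff_bijective.mp hunit).2 u
  obtain ⟨v, rfl⟩ := (ContinuousLinearMap.isUnit_iff_bijective.mp hunit).2 v
  have hcayley (x : V) : cayleyTransform X ((1 - X) x) = (1 + X) x :=
    DFunLike.congr_fun (cayleyTransform_mul_one_sub hunit) x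
  simp only [hcayley]
  simp only [add_apply, sub_apply, one_apply_eq_self, map_add, map_sub]
  linear_combination 2 * hX u v

/-- The Cayley transforms of the skew-adjoint operators of norm at most `1 / 2`: this is the compact
set `C₂` of the theorem. -/
noncomputable def cayleyBall (B : V →L[E] V →SL[σ] E) : Set (V →L[E] V) :=
  cayleyTransform '' (skewAdjointOperators B ∩ closedBall 0 (1 / 2))

lemma cayleyBall_subset_PadG [CompleteSpace V] : cayleyBall B ⊆ PadG E V (B · ·) := by
  rintro _ ⟨X, ⟨hX, hX2⟩, rfl⟩
  exact cayleyTransform_mem_PadG hX ((mem_closedBall_zero_iff.mp hX2).trans_lt (by norm_num))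

lemma isCompact_cayleyBall [ProperSpace E] [FiniteDimensional E V] : IsCompact (cayleyBall B) := by
  have := FiniteDimensional.complete E V
  have := FiniteDimensional.proper E (V →L[E] V)
  have hball : skewAdjointOperators B ∩ closedBall 0 (1 / 2) ⊆ ball 0 1 :=
    inter_subset_right.trans (closedBall_subset_ball (by norm_num))
  exact ((isCompact_closedBall 0 _).inter_left isClosed_skewAdjointOperators).image_of_continuousOn
    (continuousOn_cayleyTransform.mono hball)

lemma exists_continuous_sesquilinear [CompleteSpace E] [FiniteDimensional E V] {τ : E ≃+* E}
    [RingHomIsometric (τ : E →+* E)] {h : V → V → E}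
    (hadd : ∀ u u' v, h (u + u') v = h u v + h u' v) (hsmul : ∀ a u v, h (a • u) v = a * h u v)
    (hconj : ∀ u v, h v u = τ (h u v)) :
    ∃ B : V →L[E] V →SL[(τ : E →+* E)] E, h = (B · ·) := by
  let left (v : V) : V →ₗ[E] E := ⟨⟨(h · v), (hadd · · v)⟩, (hsmul · · v)⟩
  have hcont (u : V) : Continuous (h u) := by
    rw [funext (hconj · u)]
    exact (AddMonoidHomClass.isometry_of_norm (τ : E →+* E)
      fun _ => RingHomIsometric.norm_map).continuous.comp (left u).continuous_of_finiteDimensional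
  let right (u : V) : V →SL[(τ : E →+* E)] E :=
    { toFun := h u
      map_add' v v' := by rw [hconj, hadd, map_add, ← hconj, ← hconj]
      map_smul' a v := by rw [hconj, hsmul, map_mul, ← hconj]; rfl
      cont := hcont u }
  let form : V →ₗ[E] V →SL[(τ : E →+* E)] E :=
    { toFun := right
      map_add' u u' := ContinuousLinearMap.ext (hadd u u')
      map_smul' a u := ContinuousLinearMap.ext (hsmul a u) }
  exact ⟨LinearMap.toContinuousLinearMap form, rfl⟩

section SkewRankTwo

variable [RingHomIsometric σ]

/-- The operator `v ↦ B v z • y - B v y • z`, which is skew-adjoint for a hermitian form `B`. -/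
noncomputable def skewRankTwo (B : V →L[E] V →SL[σ] E) (y z : V) : V →L[E] V :=
  (B.flip z).smulRight y - (B.flip y).smulRight z

lemma skewRankTwo_apply (y z v : V) : skewRankTwo B y z v = B v z • y - B v y • z := rfl

lemma skewRankTwo_neg_left (y z : V) : skewRankTwo B (-y) z = -skewRankTwo B y z := by
  ext v
  simp only [skewRankTwo_apply, neg_apply, map_neg]
  module

lemma skewRankTwo_mem_skewAdjointOperators (hB : IsHermitianForm B) (y z : V) :
    skewRankTwo B y z ∈ skewAdjointOperators B := by
  intro u v
  simp only [skewRankTwo_apply, map_sub, sub_apply, map_smul, smul_apply, smul_eq_mul,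
    ContinuousLinearMap.map_smulₛₗ]
  rw [hB v y, hB v z]
  ring

lemma norm_skewRankTwo_le (y z : V) : ‖skewRankTwo B y z‖ ≤ 2 * ‖B‖ * ‖y‖ * ‖z‖ := by
  have hflip (u : V) : ‖B.flip u‖ ≤ ‖B‖ * ‖u‖ := B.opNorm_flip ▸ B.flip.le_opNorm u
  calc ‖skewRankTwo B y z‖ ≤ ‖B.flip z‖ * ‖y‖ + ‖B.flip y‖ * ‖z‖ := by
        rw [← ContinuousLinearMap.norm_smulRight_apply, ← ContinuousLinearMap.norm_smulRight_apply]
        exact norm_sub_le _ _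
    _ ≤ ‖B‖ * ‖z‖ * ‖y‖ + ‖B‖ * ‖y‖ * ‖z‖ := by gcongr <;> exact hflip _
    _ = 2 * ‖B‖ * ‖y‖ * ‖z‖ := by ring

lemma units_conj_skewRankTwo {t : (V →L[E] V)ˣ} (ht : (t : V →L[E] V) ∈ PadG E V (B · ·))
    (y z : V) : t * skewRankTwo B y z * t⁻¹ = skewRankTwo B (t.1 y) (t.1 z) := by
  rw [Units.mul_inv_eq_iff_eq_mul]
  ext v
  have hy : B (t.1 v) (t.1 y) = B v y := ht.2 v y
  have hz : B (t.1 v) (t.1 z) = B v z := ht.2 v z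
  simp only [mul_apply_eq_comp, skewRankTwo_apply, map_sub, map_smul, hy, hz]

section Orthogonal

variable [CompleteSpace V] {y z : V}

lemma cayleyTransform_skewRankTwo_apply_self (hyz : B y z = 0) (hzy : B z y = 0)
    (hX : ‖skewRankTwo B y z‖ < 1) :
    (1 + B z z * B y y) • cayleyTransform (skewRankTwo B y z) z =
      (1 - B z z * B y y) • z + (2 * B z z) • y := by
  have hcayley (v : V) : cayleyTransform (skewRankTwo B y z) (v - skewRankTwo B y z v) =
      v + skewRankTwo B y z v :=
    DFunLike.congr_fun (cayleyTransform_mul_one_sub (isUnit_one_sub_of_norm_lt_one hX)) v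
  have hz := hcayley z
  have hy := hcayley y
  simp only [skewRankTwo_apply, hyz, hzy, zero_smul, sub_zero, zero_sub, map_sub, map_neg,
    map_smul] at hz hy
  linear_combination (norm := module) hz + B z z • hy

lemma cayleyTransform_skewRankTwo_mem_PadH (hB : IsHermitianForm B) {w : V} (hwy : B w y = 0)
    (hwz : B w z = 0) (hX : ‖skewRankTwo B y z‖ < 1) :
    cayleyTransform (skewRankTwo B y z) ∈ PadH E V (B · ·) w := by
  refine ⟨cayleyTransform_mem_PadG (skewRankTwo_mem_skewAdjointOperators hB y z) hX, ?_⟩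
  have hw : skewRankTwo B y z w = 0 := by
    rw [skewRankTwo_apply, hwy, hwz, zero_smul, zero_smul, sub_zero]
  have hcayley := DFunLike.congr_fun
    (cayleyTransform_mul_one_sub (isUnit_one_sub_of_norm_lt_one hX)) w
  simpa [hw] using hcayley

lemma exists_norm_le_norm_cayleyTransform_skewRankTwo {F : Type*} [NormedAddCommGroup F]
    [NormedSpace E F] (g : V →L[E] F) (hyz : B y z = 0) (hzy : B z y = 0)
    (hX : ‖skewRankTwo B y z‖ < 1) (hsmall : ‖B z z * B y y‖ ≤ 1 / 2) :
    ∃ y' ∈ ({y, -y} : Set V),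
      ‖(2 : E)‖ * ‖g z‖ ≤ 6 * ‖g (cayleyTransform (skewRankTwo B y' z) z)‖ ∧
      ‖2 * (2 * B z z)‖ * ‖g y‖ ≤ 3 * ‖g (cayleyTransform (skewRankTwo B y' z) z)‖ := by
  let k (y' : V) : F := g (cayleyTransform (skewRankTwo B y' z) z)
  have hk : (1 + B z z * B y y) • k y = (1 - B z z * B y y) • g z + (2 * B z z) • g y := by
    simpa using congrArg g (cayleyTransform_skewRankTwo_apply_self hyz hzy hX)
  have hk' : (1 + B z z * B y y) • k (-y) = (1 - B z z * B y y) • g z - (2 * B z z) • g y := by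
    have h := congrArg g (cayleyTransform_skewRankTwo_apply_self (B := B) (y := -y) (z := z)
      (by simpa using hyz) (by simpa using hzy) (by rwa [skewRankTwo_neg_left, norm_neg]))
    simpa [sub_eq_add_neg] using h
  obtain ⟨hz, hy⟩ := norm_le_of_smul_eq_add_of_smul_eq_sub hk hk' hsmall
  rcases le_total ‖k (-y)‖ ‖k y‖ with hle | hle
  · exact ⟨y, by simp, by linarith, by linarith⟩
  · exact ⟨-y, by simp, by linarith, by linarith⟩

end Orthogonal

end SkewRankTwo

end SesquilinearForm

section OperatorControl

variable {E : Type*} [NontriviallyNormedField E]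

lemma exists_opNorm_le_mul_norm_apply {X Y : Type*} [SeminormedAddCommGroup X] [NormedSpace E X]
    [SeminormedAddCommGroup Y] [NormedSpace E Y] (f : X →L[E] Y) {δ : ℝ} (hδ : 0 < δ) {c : E}
    (hc : 1 < ‖c‖) : ∃ x, ‖x‖ ≤ δ ∧ ‖f‖ ≤ 2 * ‖c‖ / δ * ‖f x‖ := by
  have hc0 : 0 < ‖c‖ := one_pos.trans hc
  by_contra! h
  have hle : ‖f‖ ≤ ‖f‖ / 2 := by
    refine f.opNorm_le_of_shell hδ (by positivity) hc fun x hδx hxδ => ?_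
    have hlt := h x hxδ.le
    rw [div_mul_eq_mul_div, div_lt_iff₀ hδ] at hlt
    rw [div_le_iff₀ hc0] at hδx
    nlinarith [norm_nonneg f, norm_nonneg (f x)]
  have hpos := h 0 (by simpa using hδ.le)
  rw [map_zero, norm_zero, mul_zero] at hpos
  linarith

variable {V : Type*} [NormedAddCommGroup V] [NormedSpace E V] {σ : E →+* E} [RingHomIsometric σ]
  {B : V →L[E] V →SL[σ] E}

lemma norm_cayleyTransform_apply_le [CompleteSpace V] {X : V →L[E] V} (hX : ‖X‖ ≤ 1 / 2) (v : V) :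
    ‖cayleyTransform X v‖ ≤ 3 * ‖v‖ := by
  have hone : ‖(1 : V →L[E] V)‖ ≤ 1 := ContinuousLinearMap.norm_id_le
  refine (cayleyTransform X).le_of_opNorm_le ((norm_cayleyTransform_le (by linarith)).trans ?_) v
  rw [div_le_iff₀ (by linarith)]
  linarith

lemma exists_pos_forall_norm_skewRankTwo_le (B : V →L[E] V →SL[σ] E) (ν : E) (M : ℝ) :
    ∃ δ : ℝ, 0 < δ ∧ ∀ y, ‖y‖ ≤ δ →
      ‖ν * B y y‖ ≤ 1 / 2 ∧ ∀ z, ‖z‖ ≤ M → ‖skewRankTwo B y z‖ ≤ 1 / 2 := by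
  have hM : Tendsto (fun δ : ℝ => 2 * ‖B‖ * δ * M) (𝓝 0) (𝓝 0) :=
    (by fun_prop : Continuous fun δ : ℝ => 2 * ‖B‖ * δ * M).tendsto' 0 0 (by simp)
  have hν : Tendsto (fun δ : ℝ => ‖ν‖ * (‖B‖ * δ * δ)) (𝓝 0) (𝓝 0) :=
    (by fun_prop : Continuous fun δ : ℝ => ‖ν‖ * (‖B‖ * δ * δ)).tendsto' 0 0 (by simp)
  have hsmall := (hM.eventually_le_const (u := 1 / 2) (by norm_num)).and
    (hν.eventually_le_const (u := 1 / 2) (by norm_num))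
  obtain ⟨δ, ⟨hδM, hδν⟩, hδ⟩ :=
    ((hsmall.filter_mono nhdsWithin_le_nhds).and (self_mem_nhdsWithin (s := Ioi (0 : ℝ)))).exists
  refine ⟨δ, hδ, fun y hy => ⟨?_, fun z hz => ?_⟩⟩
  · rw [norm_mul]
    refine hδν.trans' ?_
    gcongr
    exact (B.le_opNorm₂ y y).trans (by gcongr)
  · exact (norm_skewRankTwo_le y z).trans <| hδM.trans' <| by gcongr

-- An operator on the orthogonal complement of `w₀` is controlled by its value at `w₁` together with
-- its norm on the orthogonal complement of `w₀` and `w₁`, and the latter is nearly attained.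
lemma exists_mem_leftOrthogonal_pair_norm_apply_le {w₀ w₁ : V} (h₁ : B w₁ w₁ ≠ 0)
    (h₁₀ : B w₁ w₀ = 0) {δ : ℝ} (hδ : 0 < δ) :
    ∃ K : ℝ, 0 ≤ K ∧ ∀ g : V →L[E] V, ∃ y ∈ leftOrthogonal B {w₀, w₁}, ‖y‖ ≤ δ ∧
      ∀ x ∈ leftOrthogonal B {w₀}, ‖g x‖ ≤ K * max ‖g w₁‖ ‖g y‖ * ‖x‖ := by
  obtain ⟨c, hc⟩ := NormedField.exists_one_lt_norm E
  let φ : V →L[E] E := (B w₁ w₁)⁻¹ • B.flip w₁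
  let P : V →L[E] V := .id E V - φ.smulRight w₁
  have hP (x : V) (hx : x ∈ leftOrthogonal B {w₀}) : P x ∈ leftOrthogonal B {w₀, w₁} := by
    rw [mem_leftOrthogonal_singleton] at hx
    have hφ : φ x * B w₁ w₁ = B x w₁ := by simp [φ, mul_right_comm, inv_mul_cancel₀ h₁]
    simp [mem_leftOrthogonal_pair, P, hx, h₁₀, hφ]
  refine ⟨‖φ‖ + 2 * ‖c‖ / δ * ‖P‖, by positivity, fun g => ?_⟩
  obtain ⟨⟨y, hy⟩, hyδ, hgy⟩ :=
    exists_opNorm_le_mul_norm_apply (g ∘L (leftOrthogonal B {w₀, w₁}).subtypeL) hδ hc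
  refine ⟨y, hy, hyδ, fun x hx => ?_⟩
  have hgP : ‖g (P x)‖ ≤ 2 * ‖c‖ / δ * ‖g y‖ * (‖P‖ * ‖x‖) :=
    ((g ∘L (leftOrthogonal B {w₀, w₁}).subtypeL).le_of_opNorm_le hgy ⟨P x, hP x hx⟩).trans
      (mul_le_mul_of_nonneg_left (P.le_opNorm x) (by positivity))
  have hsplit : g x = φ x • g w₁ + g (P x) := by simp [P]
  calc ‖g x‖ ≤ ‖φ‖ * ‖x‖ * ‖g w₁‖ + 2 * ‖c‖ / δ * ‖g y‖ * (‖P‖ * ‖x‖) := by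
        rw [hsplit]
        refine (norm_add_le _ _).trans (add_le_add ?_ hgP)
        rw [norm_smul]
        gcongr
        exact φ.le_opNorm x
    _ ≤ ‖φ‖ * ‖x‖ * max ‖g w₁‖ ‖g y‖ + 2 * ‖c‖ / δ * max ‖g w₁‖ ‖g y‖ * (‖P‖ * ‖x‖) := by
        gcongr
        · exact le_max_left _ _
        · exact le_max_right _ _
    _ = (‖φ‖ + 2 * ‖c‖ / δ * ‖P‖) * max ‖g w₁‖ ‖g y‖ * ‖x‖ := by ring

end OperatorControl

section HyperbolicDilation

variable {E V : Type*} [NontriviallyNormedField E] [NormedAddCommGroup V] [NormedSpace E V]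
  {σ : E →+* E} {B : V →L[E] V →SL[σ] E} {ν lamb : E} {w₀ w₁ : V}

/-- `w₀` and `w₁` are orthogonal with opposite nonzero norms `ν` and `-ν`, so that `w₀ + w₁` and
`w₀ - w₁` are isotropic. -/
structure IsHyperbolicPair (B : V →L[E] V →SL[σ] E) (ν : E) (w₀ w₁ : V) : Prop where
  ne_zero : ν ≠ 0
  apply_left : B w₀ w₀ = ν
  apply_right : B w₁ w₁ = -ν
  apply_left_right : B w₀ w₁ = 0
  apply_right_left : B w₁ w₀ = 0

lemma IsHyperbolicPair.exists_eq_add [NeZero (2 : E)] (hw : IsHyperbolicPair B ν w₀ w₁) (v : V) :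
    ∃ α β : E, ∃ p ∈ leftOrthogonal B {w₀, w₁}, v = α • (w₀ + w₁) + β • (w₀ - w₁) + p := by
  obtain ⟨hν, h₀₀, h₁₁, h₀₁, h₁₀⟩ := hw
  let a := B v w₀ / ν
  let b := B v w₁ / ν
  refine ⟨(a - b) / 2, (a + b) / 2, v - a • w₀ + b • w₁, ?_, ?_⟩
  · simp [mem_leftOrthogonal_pair, a, b, h₀₀, h₁₁, h₀₁, h₁₀, hν]
  · have h2 : (2 : E) ≠ 0 := two_ne_zero
    match_scalars <;> field_simp <;> ring

/-- The isometry `T` of `B` scales the isotropic vectors `w₀ + w₁` and `w₀ - w₁` by `lamb` and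
`(σ lamb)⁻¹` and fixes their orthogonal complement: this is the element `a(λ)` of the theorem. -/
structure IsHyperbolicDilation (B : V →L[E] V →SL[σ] E) (w₀ w₁ : V) (lamb : E)
    (T : V →L[E] V) : Prop where
  mem_PadG : T ∈ PadG E V (B · ·)
  apply_add : T (w₀ + w₁) = lamb • (w₀ + w₁)
  apply_sub : T (w₀ - w₁) = (σ lamb)⁻¹ • (w₀ - w₁)
  apply_of_mem_leftOrthogonal : ∀ v ∈ leftOrthogonal B {w₀, w₁}, T v = v


/-- The preimage of `lamb • w₁` under the hyperbolic dilation by `lamb`. -/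
noncomputable def dilationPreimage (σ : E →+* E) (w₀ w₁ : V) (lamb : E) : V :=
  (2⁻¹ : E) • ((w₀ + w₁) - (lamb * σ lamb) • (w₀ - w₁))

lemma norm_dilationPreimage_le [RingHomIsometric σ] (hlamb : ‖lamb‖ ≤ 1) :
    ‖dilationPreimage σ w₀ w₁ lamb‖ ≤ ‖(2⁻¹ : E)‖ * (‖w₀ + w₁‖ + ‖w₀ - w₁‖) := by
  have hscale : ‖lamb * σ lamb‖ ≤ 1 := by
    rw [norm_mul, RingHomIsometric.norm_map]
    exact mul_le_one₀ hlamb (norm_nonneg _) hlamb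
  rw [dilationPreimage, norm_smul]
  gcongr
  refine (norm_sub_le _ _).trans ?_
  rw [norm_smul]
  gcongr
  exact mul_le_of_le_one_left (norm_nonneg _) hscale

namespace IsHyperbolicDilation

variable {T T' : V →L[E] V}

lemma of_apply_of_orthogonal (hT : T ∈ PadG E V (B · ·)) (hadd : T (w₀ + w₁) = lamb • (w₀ + w₁))
    (hsub : T (w₀ - w₁) = (σ lamb)⁻¹ • (w₀ - w₁))
    (hfix : ∀ v, B v (w₀ + w₁) = 0 → B v (w₀ - w₁) = 0 → T v = v) :
    IsHyperbolicDilation B w₀ w₁ lamb T := by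
  refine ⟨hT, hadd, hsub, fun v hv => ?_⟩
  obtain ⟨hv₀, hv₁⟩ := mem_leftOrthogonal_pair.mp hv
  exact hfix v (by rw [map_add, hv₀, hv₁, add_zero]) (by rw [map_sub, hv₀, hv₁, sub_zero])

lemma apply_dilationPreimage [NeZero (2 : E)] (hT : IsHyperbolicDilation B w₀ w₁ lamb T)
    (hlamb : lamb ≠ 0) : T (dilationPreimage σ w₀ w₁ lamb) = lamb • w₁ := by
  have hσlamb : σ lamb ≠ 0 := (map_ne_zero σ).mpr hlamb
  rw [dilationPreimage, map_smul, map_sub, map_smul, hT.apply_add, hT.apply_sub, smul_smul,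
    mul_inv_cancel_right₀ hσlamb, ← smul_sub, smul_comm, add_sub_sub_cancel, ← two_smul E,
    inv_smul_smul₀ two_ne_zero]

lemma mul_eq_one [NeZero (2 : E)] (hw : IsHyperbolicPair B ν w₀ w₁)
    (hT : IsHyperbolicDilation B w₀ w₁ lamb T) (hT' : IsHyperbolicDilation B w₀ w₁ lamb⁻¹ T')
    (hlamb : lamb ≠ 0) : T * T' = 1 := by
  have hσlamb : σ lamb ≠ 0 := (map_ne_zero σ).mpr hlamb
  have hadd : T (T' (w₀ + w₁)) = w₀ + w₁ := by
    rw [hT'.apply_add, map_smul, hT.apply_add, inv_smul_smul₀ hlamb]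
  have hsub : T (T' (w₀ - w₁)) = w₀ - w₁ := by
    rw [hT'.apply_sub, map_smul, hT.apply_sub, map_inv₀, inv_inv, smul_inv_smul₀ hσlamb]
  ext v
  obtain ⟨α, β, p, hp, rfl⟩ := hw.exists_eq_add v
  rw [mul_apply_eq_comp, one_apply_eq_self, map_add T', map_add T', map_smul, map_smul, map_add T,
    map_add T, map_smul, map_smul, hadd, hsub, hT'.apply_of_mem_leftOrthogonal p hp,
    hT.apply_of_mem_leftOrthogonal p hp]

end IsHyperbolicDilation

variable [NeZero (2 : E)] [RingHomIsometric σ] {y : V}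

lemma IsHyperbolicDilation.exists_conj_eq_cayleyTransform {T T' : V →L[E] V}
    (hB : IsHermitianForm B) (hw : IsHyperbolicPair B ν w₀ w₁)
    (hT : IsHyperbolicDilation B w₀ w₁ lamb T) (hT' : IsHyperbolicDilation B w₀ w₁ lamb⁻¹ T')
    (hlamb : lamb ≠ 0) (hy : y ∈ leftOrthogonal B {w₀, w₁})
    (hX : ‖skewRankTwo B y (dilationPreimage σ w₀ w₁ lamb)‖ ≤ 1 / 2) :
    ∃ γ ∈ cayleyBall B,
      T.comp (γ.comp T') = cayleyTransform (skewRankTwo B y (lamb • w₁)) := by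
  have hT'T : T' * T = 1 := hT'.mul_eq_one hw (by rwa [inv_inv]) (inv_ne_zero hlamb)
  let t : (V →L[E] V)ˣ := ⟨T, T', hT.mul_eq_one hw hT' hlamb, hT'T⟩
  refine ⟨_, mem_image_of_mem _ ⟨skewRankTwo_mem_skewAdjointOperators hB _ _,
    mem_closedBall_zero_iff.mpr hX⟩, ?_⟩
  calc T * (cayleyTransform (skewRankTwo B y (dilationPreimage σ w₀ w₁ lamb)) * T')
      = t * cayleyTransform (skewRankTwo B y (dilationPreimage σ w₀ w₁ lamb)) * t⁻¹ :=
        (mul_assoc _ _ _).symm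
    _ = cayleyTransform (skewRankTwo B (T y) (T (dilationPreimage σ w₀ w₁ lamb))) := by
        rw [units_conj_cayleyTransform, units_conj_skewRankTwo hT.mem_PadG]
    _ = cayleyTransform (skewRankTwo B y (lamb • w₁)) := by
        rw [hT.apply_of_mem_leftOrthogonal y hy, hT.apply_dilationPreimage hlamb]

variable [CompleteSpace V]

lemma IsHyperbolicPair.exists_norm_mul_max_le {F : Type*} [NormedAddCommGroup F] [NormedSpace E F]
    (hB : IsHermitianForm B) (hw : IsHyperbolicPair B ν w₀ w₁) (g : V →L[E] F) (hlamb : lamb ≠ 0)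
    (hlamb1 : ‖lamb‖ ≤ 1) (hy : y ∈ leftOrthogonal B {w₀, w₁})
    (hX : ‖skewRankTwo B y (lamb • w₁)‖ < 1) (hsmall : ‖ν * B y y‖ ≤ 1 / 2) :
    ∃ y' ∈ ({y, -y} : Set V), ‖lamb‖ * max ‖g w₁‖ ‖g y‖ ≤
      max (6 / ‖(2 : E)‖) (3 / ‖2 * (2 * ν)‖) *
        ‖g (cayleyTransform (skewRankTwo B y' (lamb • w₁)) w₁)‖ := by
  have hyw : B y w₁ = 0 := (mem_leftOrthogonal_pair.mp hy).2
  have hwy : B w₁ y = 0 := hB.eq_zero_comm.mp hyw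
  have hlamb0 : 0 < ‖lamb‖ := norm_pos_iff.mpr hlamb
  have h2 : 0 < ‖(2 : E)‖ := norm_pos_iff.mpr two_ne_zero
  have h4ν : 0 < ‖2 * (2 * ν)‖ :=
    norm_pos_iff.mpr (mul_ne_zero two_ne_zero (mul_ne_zero two_ne_zero hw.ne_zero))
  have hzz : B (lamb • w₁) (lamb • w₁) = -(lamb * σ lamb * ν) := by
    simp only [map_smul, ContinuousLinearMap.map_smulₛₗ, smul_apply, smul_eq_mul, hw.apply_right]
    ring
  have hσ : ‖σ lamb‖ = ‖lamb‖ := RingHomIsometric.norm_map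
  obtain ⟨y', hy', hgw, hgy⟩ := exists_norm_le_norm_cayleyTransform_skewRankTwo (B := B) (y := y)
    (z := lamb • w₁) g (by simp [hyw]) (by simp [hwy]) hX (by
      rw [hzz, neg_mul, norm_neg, mul_assoc, norm_mul, norm_mul, hσ]
      exact (mul_le_of_le_one_left (norm_nonneg _)
        (mul_le_one₀ hlamb1 hlamb0.le hlamb1)).trans hsmall)
  refine ⟨y', hy', ?_⟩
  set N := ‖g (cayleyTransform (skewRankTwo B y' (lamb • w₁)) w₁)‖ with hN
  rw [hzz, mul_neg, mul_neg, norm_neg] at hgy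
  simp only [map_smul, norm_smul, ← hN] at hgw hgy
  have hgw' : ‖lamb‖ * ‖g w₁‖ ≤ 6 / ‖(2 : E)‖ * N := by
    refine (mul_le_of_le_one_left (norm_nonneg _) hlamb1).trans ?_
    rw [div_mul_eq_mul_div, le_div_iff₀ h2]
    refine le_of_mul_le_mul_left ?_ hlamb0
    linarith
  have hgy' : ‖lamb‖ * ‖g y‖ ≤ 3 / ‖2 * (2 * ν)‖ * N := by
    rw [div_mul_eq_mul_div, le_div_iff₀ h4ν]
    refine le_of_mul_le_mul_left ?_ hlamb0
    simp only [norm_mul, hσ] at hgy ⊢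
    linarith
  rw [mul_max_of_nonneg _ _ hlamb0.le, max_mul_of_nonneg _ _ (norm_nonneg _)]
  exact max_le_max hgw' hgy'

lemma IsHyperbolicPair.exists_skewRankTwo_norm_mul_le (hB : IsHermitianForm B)
    (hw : IsHyperbolicPair B ν w₀ w₁) :
    ∃ K : ℝ, 0 ≤ K ∧ ∀ (g : V →L[E] V) (lamb : E), lamb ≠ 0 → ‖lamb‖ ≤ 1 →
      ∃ y ∈ leftOrthogonal B {w₀, w₁},
        ‖skewRankTwo B y (dilationPreimage σ w₀ w₁ lamb)‖ ≤ 1 / 2 ∧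
        cayleyTransform (skewRankTwo B y (lamb • w₁)) ∈ PadH E V (B · ·) w₀ ∧
        ∀ x ∈ leftOrthogonal B {w₀},
          ‖lamb‖ * ‖g (cayleyTransform (skewRankTwo B y (lamb • w₁)) x)‖ ≤
            K * ‖x‖ * ‖g (cayleyTransform (skewRankTwo B y (lamb • w₁)) w₁)‖ := by
  obtain ⟨δ, hδ, hsmall⟩ := exists_pos_forall_norm_skewRankTwo_le B ν
    (max (‖(2⁻¹ : E)‖ * (‖w₀ + w₁‖ + ‖w₀ - w₁‖)) ‖w₁‖)
  have hw₁ : B w₁ w₁ ≠ 0 := hw.apply_right ▸ neg_ne_zero.mpr hw.ne_zero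
  obtain ⟨K, hK, hcontrol⟩ :=
    exists_mem_leftOrthogonal_pair_norm_apply_le hw₁ hw.apply_right_left hδ
  set L := max (6 / ‖(2 : E)‖) (3 / ‖2 * (2 * ν)‖)
  refine ⟨3 * K * L, by positivity, fun g lamb hlamb hlamb1 => ?_⟩
  have hlambw : ‖lamb • w₁‖ ≤ max (‖(2⁻¹ : E)‖ * (‖w₀ + w₁‖ + ‖w₀ - w₁‖)) ‖w₁‖ := by
    rw [norm_smul]
    exact (mul_le_of_le_one_left (norm_nonneg _) hlamb1).trans (le_max_right _ _)
  obtain ⟨y, hy, hyδ, hgx⟩ := hcontrol g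
  obtain ⟨y', hy', hmax⟩ := hw.exists_norm_mul_max_le hB g hlamb hlamb1 hy
    (((hsmall y hyδ).2 _ hlambw).trans_lt (by norm_num)) (hsmall y hyδ).1
  obtain ⟨hy'mem, hy'δ⟩ : y' ∈ leftOrthogonal B {w₀, w₁} ∧ ‖y'‖ ≤ δ := by
    rcases hy' with rfl | rfl
    exacts [⟨hy, hyδ⟩, ⟨neg_mem hy, by rwa [norm_neg]⟩]
  have hX := (hsmall y' hy'δ).2 _ hlambw
  have hH : cayleyTransform (skewRankTwo B y' (lamb • w₁)) ∈ PadH E V (B · ·) w₀ :=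
    cayleyTransform_skewRankTwo_mem_PadH hB
      (hB.eq_zero_comm.mp (mem_leftOrthogonal_pair.mp hy'mem).1)
      (by rw [ContinuousLinearMap.map_smulₛₗ, hw.apply_left_right, smul_zero])
      (hX.trans_lt (by norm_num))
  refine ⟨y', hy'mem, (hsmall y' hy'δ).2 _ ((norm_dilationPreimage_le hlamb1).trans
    (le_max_left _ _)), hH, fun x hx => ?_⟩
  set k := cayleyTransform (skewRankTwo B y' (lamb • w₁))
  calc ‖lamb‖ * ‖g (k x)‖ ≤ ‖lamb‖ * (K * max ‖g w₁‖ ‖g y‖ * ‖k x‖) := by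
        gcongr
        exact hgx _ (mapsTo_leftOrthogonal_of_mem_PadH hH hx)
    _ = K * (‖lamb‖ * max ‖g w₁‖ ‖g y‖) * ‖k x‖ := by ring
    _ ≤ K * (L * ‖g (k w₁)‖) * (3 * ‖x‖) := by
        gcongr
        exact norm_cayleyTransform_apply_le hX x
    _ = 3 * K * L * ‖x‖ * ‖g (k w₁)‖ := by ring

theorem IsHyperbolicPair.exists_cayleyBall_norm_mul_le (hB : IsHermitianForm B)
    (hw : IsHyperbolicPair B ν w₀ w₁) :
    ∃ K : ℝ, 0 ≤ K ∧ ∀ (g T T' : V →L[E] V) (lamb : E), lamb ≠ 0 → ‖lamb‖ ≤ 1 →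
      IsHyperbolicDilation B w₀ w₁ lamb T → IsHyperbolicDilation B w₀ w₁ lamb⁻¹ T' →
      ∃ γ ∈ cayleyBall B, T.comp (γ.comp T') ∈ PadH E V (B · ·) w₀ ∧
        ∀ x ∈ leftOrthogonal B {w₀},
          ‖lamb‖ * ‖g (T.comp (γ.comp T') x)‖ ≤ K * ‖x‖ * ‖g (T.comp (γ.comp T') w₁)‖ := by
  obtain ⟨K, hK, h⟩ := hw.exists_skewRankTwo_norm_mul_le hB
  refine ⟨K, hK, fun g T T' lamb hlamb hlamb1 hT hT' => ?_⟩
  obtain ⟨y, hy, hX, hH, hle⟩ := h g lamb hlamb hlamb1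
  obtain ⟨γ, hγ, hconj⟩ := hT.exists_conj_eq_cayleyTransform hB hw hT' hlamb hy hX
  exact ⟨γ, hγ, hconj ▸ hH, hconj ▸ hle⟩

end HyperbolicDilation

section Lattice

variable {E V : Type*} [NontriviallyNormedField E] [NormedAddCommGroup V] [NormedSpace E V]

lemma mem_nhdsWithin_zero_of_forall_exists_smul_mem [CompleteSpace E] {S : Submodule E V}
    [FiniteDimensional E S] {R : Set V} (hadd : ∀ x ∈ R, ∀ y ∈ R, x + y ∈ R)
    (hsmul : ∀ c : E, ‖c‖ ≤ 1 → ∀ x ∈ R, c • x ∈ R)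
    (habs : ∀ x ∈ S, ∃ c : E, c ≠ 0 ∧ c • x ∈ R) : R ∈ 𝓝[S] 0 := by
  let b := Module.finBasis E S
  choose c hc hcR using fun i => habs (b i) (b i).2
  obtain ⟨c₀, -, hc₀R⟩ := habs 0 S.zero_mem
  have hcoord : ∀ᶠ x : S in 𝓝 0, ∀ i, ‖b.repr x i / c i‖ ≤ 1 := by
    refine eventually_all.mpr fun i => ?_
    have htendsto : Tendsto (fun x : S => ‖b.repr x i / c i‖) (𝓝 0) (𝓝 0) :=
      (((b.coord i).continuous_of_finiteDimensional.div_const (c i)).norm).tendsto' 0 0 (by simp)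
    exact htendsto.eventually_le_const one_pos
  refine (preimage_coe_mem_nhds_subtype (a := (0 : S))).mp ?_
  filter_upwards [hcoord] with x hx
  have hsum : (x : V) = ∑ i, (b.repr x i / c i) • c i • (b i : V) := by
    simp only [smul_smul, div_mul_cancel₀ _ (hc _)]
    exact_mod_cast (congrArg Subtype.val (b.sum_repr x)).symm
  rw [mem_preimage, hsum]
  exact Finset.sum_induction _ (· ∈ R) (fun u v hu hv => hadd u hu v hv)
    (by rwa [smul_zero] at hc₀R) fun i _ => hsmul _ (hx i) _ (hcR i)

lemma exists_forall_eq_zpow_smul {S : Submodule E V} {R : Set V} (hRS : R ⊆ S)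
    (hR : R ∈ 𝓝[S] 0) (hbdd : Bornology.IsBounded R) {π : E} (hπ : π ≠ 0) (hπ1 : ‖π‖ < 1) {K : ℝ}
    (hK : 0 ≤ K) :
    ∃ c₀ : ℕ, ∀ (f : V →L[E] V) (w : V) (m : ℤ), MapsTo f S S →
      (∀ x ∈ S, ‖π‖ ^ m * ‖f x‖ ≤ K * ‖x‖ * ‖f w‖) →
      ∀ n : ℤ, (∃ u ∈ R, f w = π ^ n • u) →
        ∀ v ∈ R, ∃ u ∈ R, f v = π ^ (n - m - c₀) • u := by
  obtain ⟨ε, hε, hball⟩ := Metric.mem_nhdsWithin_iff.mp hR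
  obtain ⟨C, hC, hRC⟩ := hbdd.exists_pos_norm_le
  have hπ0 : 0 < ‖π‖ := norm_pos_iff.mpr hπ
  obtain ⟨c₀, hc₀⟩ : ∃ c₀ : ℕ, ‖π‖ ^ c₀ * (K * C * C) < ε := by
    have htendsto := (tendsto_pow_atTop_nhds_zero_of_lt_one hπ0.le hπ1).mul_const (K * C * C)
    rw [zero_mul] at htendsto
    exact (htendsto.eventually_lt_const hε).exists
  refine ⟨c₀, fun f w m hmaps hf n ⟨u, hu, hfw⟩ v hv => ?_⟩
  have hfv : ‖π‖ ^ m * ‖f v‖ ≤ ‖π‖ ^ n * (K * C * C) :=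
    calc ‖π‖ ^ m * ‖f v‖ ≤ K * ‖v‖ * (‖π‖ ^ n * ‖u‖) := by
          simpa only [hfw, norm_smul, norm_zpow] using hf v (hRS hv)
      _ ≤ K * C * (‖π‖ ^ n * C) := by
          gcongr
          exacts [hRC v hv, hRC u hu]
      _ = ‖π‖ ^ n * (K * C * C) := by ring
  refine ⟨π ^ (m + c₀ - n) • f v, hball ⟨?_, S.smul_mem _ (hmaps (hRS hv))⟩, ?_⟩
  · rw [mem_ball_zero_iff, norm_smul, norm_zpow]
    refine hc₀.trans_le' ?_
    calc ‖π‖ ^ (m + c₀ - n) * ‖f v‖ = ‖π‖ ^ (c₀ - n : ℤ) * (‖π‖ ^ m * ‖f v‖) := by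
          rw [← mul_assoc, ← zpow_add₀ hπ0.ne']
          ring_nf
      _ ≤ ‖π‖ ^ (c₀ - n : ℤ) * (‖π‖ ^ n * (K * C * C)) := by gcongr
      _ = ‖π‖ ^ c₀ * (K * C * C) := by
          rw [← mul_assoc, ← zpow_add₀ hπ0.ne', sub_add_cancel, zpow_natCast]
  · rw [smul_smul, ← zpow_add₀ hπ, show n - m - c₀ + (m + c₀ - n) = 0 by ring, zpow_zero, one_smul]

variable {l : ℕ} {w : ℕ → V} {R : Set V}

lemma isBounded_PadR1 (hR : Bornology.IsBounded R) : Bornology.IsBounded (PadR1 E V l w R) := by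
  obtain ⟨C, hC⟩ := hR.exists_norm_le
  refine isBounded_iff_forall_norm_le.mpr ⟨∑ i ∈ Finset.Icc 1 l, ‖w i‖ + C, ?_⟩
  rintro _ ⟨b, hb, x, hx, rfl⟩
  refine (norm_add_le _ _).trans (add_le_add (norm_sum_le_of_le _ fun i _ => ?_) (hC x hx))
  rw [norm_smul]
  exact mul_le_of_le_one_left (norm_nonneg _) (hb i)

variable {σ : E →+* E} {B : V →L[E] V →SL[σ] E}

lemma PadR1_subset_leftOrthogonal (hw : ∀ i ∈ Finset.Icc 1 l, B (w i) (w 0) = 0)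
    (hR : R ⊆ leftOrthogonal B {w 0}) : PadR1 E V l w R ⊆ leftOrthogonal B {w 0} := by
  rintro _ ⟨b, -, x, hx, rfl⟩
  exact add_mem (sum_mem fun i hi =>
    Submodule.smul_mem _ _ (mem_leftOrthogonal_singleton.mpr (hw i hi))) (hR hx)

lemma sub_sum_smul_mem_leftOrthogonal
    (horth : ∀ i ≤ l, ∀ j ≤ l, i ≠ j → B (w i) (w j) = 0) (hw : ∀ i ≤ l, B (w i) (w i) ≠ 0)
    {x : V} (hx : x ∈ leftOrthogonal B {w 0}) :
    x - ∑ i ∈ Finset.Icc 1 l, (B x (w i) / B (w i) (w i)) • w i ∈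
      leftOrthogonal B (w '' Iic l) := by
  rintro _ ⟨j, hj, rfl⟩
  have hterm (i : ℕ) (hi : i ∈ Finset.Icc 1 l) :
      B ((B x (w i) / B (w i) (w i)) • w i) (w j) = if i = j then B x (w j) else 0 := by
    have hil := (Finset.mem_Icc.mp hi).2
    rw [map_smul, smul_apply, smul_eq_mul]
    split_ifs with hij
    · rw [hij, div_mul_cancel₀ _ (hw j hj)]
    · rw [horth i hil j hj hij, mul_zero]
  rw [map_sub, sub_apply, map_sum, sum_apply, Finset.sum_congr rfl hterm, Finset.sum_ite_eq']
  rcases j.eq_zero_or_pos with rfl | hj0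
  · simp [mem_leftOrthogonal_singleton.mp hx]
  · simp [Nat.one_le_iff_ne_zero.mpr hj0.ne', mem_Iic.mp hj]

lemma PadR1_mem_nhdsWithin (horth : ∀ i ≤ l, ∀ j ≤ l, i ≠ j → B (w i) (w j) = 0)
    (hw : ∀ i ≤ l, B (w i) (w i) ≠ 0) (hR : R ∈ 𝓝[leftOrthogonal B (w '' Iic l)] 0) :
    PadR1 E V l w R ∈ 𝓝[leftOrthogonal B {w 0}] 0 := by
  let coeff (x : V) (i : ℕ) : E := B x (w i) / B (w i) (w i)
  have hcoeff : ∀ᶠ x in 𝓝 0, ∀ i ∈ Finset.Icc 1 l, ‖coeff x i‖ ≤ 1 := by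
    refine (Finset.Icc 1 l).eventually_all.mpr fun i _ => ?_
    have htendsto : Tendsto (fun x => ‖coeff x i‖) (𝓝 0) (𝓝 0) :=
      (by fun_prop : Continuous fun x => ‖coeff x i‖).tendsto' 0 0 (by simp [coeff])
    exact htendsto.eventually_le_const one_pos
  have hproj : Tendsto (fun x => x - ∑ i ∈ Finset.Icc 1 l, coeff x i • w i)
      (𝓝[leftOrthogonal B {w 0}] 0) (𝓝[leftOrthogonal B (w '' Iic l)] 0) := by
    refine tendsto_nhdsWithin_of_tendsto_nhds_of_eventually_within _ ?_ ?_
    · exact ((by fun_prop : Continuous fun x => x - ∑ i ∈ Finset.Icc 1 l, coeff x i • w i).tendsto'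
        0 0 (by simp [coeff])).mono_left nhdsWithin_le_nhds
    · filter_upwards [self_mem_nhdsWithin] with x hx
      exact sub_sum_smul_mem_leftOrthogonal horth hw hx
  filter_upwards [hproj hR, nhdsWithin_le_nhds hcoeff] with x hxR hx
  refine ⟨(Finset.Icc 1 l : Set ℕ).indicator (coeff x), fun i => ?_, _, hxR, ?_⟩
  · by_cases hi : i ∈ Finset.Icc 1 l
    · rw [indicator_of_mem (by exact hi)]
      exact hx i hi
    · rw [indicator_of_notMem (by exact hi), norm_zero]
      exact zero_le_one
  · rw [Finset.sum_congr rfl fun i hi => by rw [indicator_of_mem (by exact hi)], add_sub_cancel]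

end Lattice

theorem stmt_10_general {E : Type*} [NontriviallyNormedField E] [ProperSpace E] [NeZero (2 : E)]
    {πE : E} (hπ0 : πE ≠ 0) (hπ1 : ‖πE‖ < 1)
    {valE : E → ℤ} (hval : ∀ x : E, x ≠ 0 → ‖x‖ = ‖πE‖ ^ valE x)
    {σ : E →+* E} [RingHomIsometric σ]
    {V₀ : Type*} [NormedAddCommGroup V₀] [NormedSpace E V₀] [FiniteDimensional E V₀]
    {B : V₀ →L[E] V₀ →SL[σ] E} (hB : IsHermitianForm B)
    {ν₀ : E} (hν0 : ν₀ ≠ 0) {l : ℕ} (hl : 1 ≤ l) {w : ℕ → V₀}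
    (horth : ∀ i ≤ l, ∀ j ≤ l, i ≠ j → B (w i) (w j) = 0)
    (hvalw : ∀ i ≤ l, B (w i) (w i) = (-1 : E) ^ i * ν₀)
    {Rsharp : Set V₀} (hRsub : Rsharp ⊆ leftOrthogonal B (w '' Iic l))
    (hRadd : ∀ x ∈ Rsharp, ∀ y ∈ Rsharp, x + y ∈ Rsharp)
    (hRsmul : ∀ c : E, ‖c‖ ≤ 1 → ∀ x ∈ Rsharp, c • x ∈ Rsharp)
    (hRspan : ∀ v ∈ leftOrthogonal B (w '' Iic l), ∃ c : E, c ≠ 0 ∧ c • v ∈ Rsharp)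
    (hRbdd : Bornology.IsBounded Rsharp) {aMap : E → (V₀ →L[E] V₀)}
    (ha : ∀ lamb : E, lamb ≠ 0 → IsHyperbolicDilation B (w 0) (w 1) lamb (aMap lamb)) :
    ∃ (C₂ : Set (V₀ →L[E] V₀)) (c₀ : ℕ), C₂ ⊆ PadG E V₀ (B · ·) ∧ IsCompact C₂ ∧
      ∀ g : V₀ →L[E] V₀, MapsTo g (leftOrthogonal B {w 0}) (leftOrthogonal B {w 0}) →
        ∀ lamb : E, lamb ≠ 0 → ‖lamb‖ ≤ 1 →
          ∃ γ ∈ C₂,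
            (aMap lamb).comp (γ.comp (aMap lamb⁻¹)) ∈ PadH E V₀ (B · ·) (w 0) ∧
            ∀ n : ℤ,
              (∃ u ∈ PadR1 E V₀ l w Rsharp,
                (g.comp ((aMap lamb).comp (γ.comp (aMap lamb⁻¹)))) (w 1) = πE ^ n • u) →
              ∀ v ∈ PadR1 E V₀ l w Rsharp,
                ∃ u ∈ PadR1 E V₀ l w Rsharp,
                  (g.comp ((aMap lamb).comp (γ.comp (aMap lamb⁻¹)))) v =
                    πE ^ (n - valE lamb - (c₀ : ℤ)) • u := by
  have := FiniteDimensional.complete E V₀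
  have hw : IsHyperbolicPair B ν₀ (w 0) (w 1) :=
    ⟨hν0, by simpa using hvalw 0 l.zero_le, by simpa using hvalw 1 hl,
      horth 0 l.zero_le 1 hl zero_ne_one, horth 1 hl 0 l.zero_le one_ne_zero⟩
  have hne : ∀ i ≤ l, B (w i) (w i) ≠ 0 := fun i hi => by
    rw [hvalw i hi]
    exact mul_ne_zero (pow_ne_zero i (neg_ne_zero.mpr one_ne_zero)) hν0
  have hRsub₀ : Rsharp ⊆ leftOrthogonal B {w 0} := fun x hx =>
    mem_leftOrthogonal_singleton.mpr (hRsub hx _ (mem_image_of_mem w (mem_Iic.mpr l.zero_le)))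
  have hR₁sub : PadR1 E V₀ l w Rsharp ⊆ leftOrthogonal B {w 0} :=
    PadR1_subset_leftOrthogonal (fun i hi => horth i (Finset.mem_Icc.mp hi).2 0 l.zero_le
      (Nat.one_le_iff_ne_zero.mp (Finset.mem_Icc.mp hi).1)) hRsub₀
  have hR₁nhds : PadR1 E V₀ l w Rsharp ∈ 𝓝[leftOrthogonal B {w 0}] 0 :=
    PadR1_mem_nhdsWithin horth hne
      (mem_nhdsWithin_zero_of_forall_exists_smul_mem hRadd hRsmul hRspan)
  obtain ⟨K, hK, hbound⟩ := hw.exists_cayleyBall_norm_mul_le hB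
  obtain ⟨c₀, hlattice⟩ :=
    exists_forall_eq_zpow_smul hR₁sub hR₁nhds (isBounded_PadR1 hRbdd) hπ0 hπ1 hK
  refine ⟨cayleyBall B, c₀, cayleyBall_subset_PadG, isCompact_cayleyBall,
    fun g hg lamb hlamb hlamb1 => ?_⟩
  obtain ⟨γ, hγ, hγH, hle⟩ :=
    hbound g _ _ lamb hlamb hlamb1 (ha lamb hlamb) (ha lamb⁻¹ (inv_ne_zero hlamb))
  rw [hval lamb hlamb] at hle
  exact ⟨γ, hγ, hγH, hlattice _ (w 1) _ (hg.comp (mapsTo_leftOrthogonal_of_mem_PadH hγH)) hle⟩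

/-- for `l ≥ 1` there exist a compact subset `C₂ ⊆ G₀` and a constant
`c₀ ≥ 0` such that for every `h ∈ H` and every `λ ∈ O_E ∖ {0}` there is
`h' = h·(a(λ) γ a(λ)⁻¹)` with `γ ∈ C₂`, `a(λ) γ a(λ)⁻¹ ∈ H` and
`val_{R₁}(h'|_W) ≥ val_{R₁}(h'(w₁)) − val_E(λ) − c₀` (the valuation inequality being
encoded via the lattices `πE^n R₁`). -/
theorem stmt_10 (E : Type*) [NontriviallyNormedField E] [CompleteSpace E] [CharZero E]
    (hna : ∀ x y : E, ‖x + y‖ ≤ max ‖x‖ ‖y‖)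
    (hloc : IsCompact (Metric.closedBall (0 : E) 1))
    (πE : E) (hπ0 : πE ≠ 0) (hπ1 : ‖πE‖ < 1)
    (valE : E → ℤ) (hval : ∀ x : E, x ≠ 0 → ‖x‖ = ‖πE‖ ^ valE x) (hvalπ : valE πE = 1)
    (σ : E ≃+* E) (hσ2 : ∀ x : E, σ (σ x) = x) (hσnt : ∃ x : E, σ x ≠ x)
    (hσiso : ∀ x : E, ‖σ x‖ = ‖x‖)
    (V₀ : Type*) [NormedAddCommGroup V₀] [NormedSpace E V₀] [FiniteDimensional E V₀]
    (h : V₀ → V₀ → E)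
    (haddl : ∀ u u' v : V₀, h (u + u') v = h u v + h u' v)
    (hsmull : ∀ (a : E) (u v : V₀), h (a • u) v = a * h u v)
    (hconj : ∀ u v : V₀, h v u = σ (h u v))
    (hnd : ∀ u : V₀, (∀ v : V₀, h u v = 0) → u = 0)
    (ν₀ : E) (hν0 : ν₀ ≠ 0) (hνF : σ ν₀ = ν₀)
    (l : ℕ) (hl : 1 ≤ l) (w : ℕ → V₀)
    (horth : ∀ i ≤ l, ∀ j ≤ l, i ≠ j → h (w i) (w j) = 0)
    (hvalw : ∀ i ≤ l, h (w i) (w i) = (-1 : E) ^ i * ν₀)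
    (han : ∀ v ∈ PadVan E V₀ h l w, v ≠ 0 → h v v ≠ 0)
    (Rsharp : Set V₀)
    (hRsub : ∀ x ∈ Rsharp, h x (w 0) = 0 ∧ ∀ i : ℕ, 1 ≤ i → i ≤ l → h x (w i) = 0)
    (hRadd : ∀ x ∈ Rsharp, ∀ y ∈ Rsharp, x + y ∈ Rsharp)
    (hRsmul : ∀ c : E, ‖c‖ ≤ 1 → ∀ x ∈ Rsharp, c • x ∈ Rsharp)
    (hRspan : ∀ v : V₀, h v (w 0) = 0 → (∀ i : ℕ, 1 ≤ i → i ≤ l → h v (w i) = 0) →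
      ∃ c : E, c ≠ 0 ∧ c • v ∈ Rsharp)
    (hRbdd : ∃ C : ℝ, ∀ x ∈ Rsharp, ‖x‖ ≤ C)
    (aMap : E → (V₀ →L[E] V₀))
    (haG : ∀ lamb : E, lamb ≠ 0 → aMap lamb ∈ PadG E V₀ h)
    (ha1 : ∀ lamb : E, lamb ≠ 0 → aMap lamb (w 0 + w 1) = lamb • (w 0 + w 1))
    (ha2 : ∀ lamb : E, lamb ≠ 0 → aMap lamb (w 0 - w 1) = (σ lamb)⁻¹ • (w 0 - w 1))
    (ha3 : ∀ lamb : E, lamb ≠ 0 → ∀ v : V₀, h v (w 0 + w 1) = 0 → h v (w 0 - w 1) = 0 →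
      aMap lamb v = v) :
    ∃ (C₂ : Set (V₀ →L[E] V₀)) (c₀ : ℕ), C₂ ⊆ PadG E V₀ h ∧ IsCompact C₂ ∧
      ∀ g ∈ PadH E V₀ h (w 0), ∀ lamb : E, lamb ≠ 0 → ‖lamb‖ ≤ 1 →
        ∃ γ ∈ C₂,
          (aMap lamb).comp (γ.comp (aMap lamb⁻¹)) ∈ PadH E V₀ h (w 0) ∧
          ∀ n : ℤ,
            (∃ u ∈ PadR1 E V₀ l w Rsharp,
              (g.comp ((aMap lamb).comp (γ.comp (aMap lamb⁻¹)))) (w 1) = πE ^ n • u) →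
            ∀ v ∈ PadR1 E V₀ l w Rsharp,
              ∃ u ∈ PadR1 E V₀ l w Rsharp,
                (g.comp ((aMap lamb).comp (γ.comp (aMap lamb⁻¹)))) v =
                  πE ^ (n - valE lamb - (c₀ : ℤ)) • u := by
  have : RingHomIsometric (σ : E →+* E) := ⟨hσiso _⟩
  have : LocallyCompactSpace E := hloc.locallyCompactSpace_of_mem_nhds_of_addGroup (x := 0)
    (closedBall_mem_nhds 0 one_pos)
  have : ProperSpace E := .of_locallyCompactSpace E
  obtain ⟨B, rfl⟩ := exists_continuous_sesquilinear haddl hsmull hconj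
  have ha (lamb : E) (hlamb : lamb ≠ 0) : IsHyperbolicDilation B (w 0) (w 1) lamb (aMap lamb) :=
    .of_apply_of_orthogonal (haG lamb hlamb) (ha1 lamb hlamb) (ha2 lamb hlamb) (ha3 lamb hlamb)
  obtain ⟨C₂, c₀, hC₂G, hC₂, hC₂H⟩ := stmt_10_general hπ0 hπ1 hval hconj hν0 hl horth hvalw
    (fun x hx => mem_leftOrthogonal_image_Iic.mpr (hRsub x hx)) hRadd hRsmul
    (fun v hv => (mem_leftOrthogonal_image_Iic.mp hv).elim (hRspan v))
    (isBounded_iff_forall_norm_le.mpr hRbdd) ha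
  exact ⟨C₂, c₀, hC₂G, hC₂, fun g hg => hC₂H g (mapsTo_leftOrthogonal_of_mem_PadH hg)⟩
end
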